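/- arXiv:2302.09267 — 4 statements merged into one kernel-verified Lean document; each statement's English description precedes it below -/
import Mathlib

section
/- Under the GDRO setup with losses in [0,1], consider the bandit interaction of Algorithm 2 over rounds t = 1,…,T: w_t ∈ W is F_{t−1}-measurable, q_t ∈ Δ_m is F_{t−1}-measurable with q₁ = (1/m,…,1/m), an index i_t ∈ [m] is drawn with conditional law q_t, a sample z_t^{(i_t)} ∼ P_{i_t} is drawn, the Implicit-eXploration loss estimator is s̃_{t,i} = (1 − ℓ(w_t; z_t^{(i_t)}))/(q_{t,i} + γ) · 1[i_t = i] for i ∈ [m], and q_{t+1} = argmin_{q∈Δ_m} {η_q⟨s̃_t, q − q_t⟩ + B_q(q, q_t)}. With η_q = √(ln m/(mT)) and γ = η_q/2, the q-player's regret satisfies E[max_{q∈Δ_m} Σ_{t=1}^T φ(w_t,q) − Σ_{t=1}^T φ(w_t,q_t)] ≤ 3√(mT ln m) + √(T/2) + 3(√(mT/ln m) + √(T/2) + 1), and for every δ ∈ (0,1), with probability at least 1 − δ, max_{q∈Δ_m} Σ_{t=1}^T φ(w_t,q) − Σ_{t=1}^T φ(w_t,q_t) ≤ 3√(mT ln m)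 + √(T/2) + (√(mT/ln m) + √(T/2) + 1)·ln(3/δ). -/
/-!
Write `r t i = 1 - R i (w t)` for the mean gains, `g t` for the observed gain and `s̃` for the
estimator. Against a fixed arm `j` the regret splits pathwise (`regret_decomposition`) into

* the mirror-descent regret on the vectors `s̃`, controlled by `log m / η` and a second-order term
  (`mirror_regret`; the minimiser over the simplex is identified with exponential weights in
  `mirror_step_eq`, which also keeps every weight positive, away from the junk value `log 0`);
* the total estimator error `∑ t, ∑ i, (s̃ - r)` and the error `∑ t, (s̃ - r)` of arm `j`;
* the deviation `∑ t, (⟨q, r⟩ - g)` of the observed gains.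

Each of the random terms has an exponential moment at most one after rescaling: the estimator errors
because of implicit exploration (`ix_step`), the deviation by the convexity argument of Hoeffding
with `cosh c ≤ exp (c² / 2)` (`azuma_step`). Both rest on `sampling_identity`, the conditional mean
of the gain on the drawn arm, and are chained over rounds by `integral_exp_sum_le_one`. The maximum
over arms is absorbed by averaging the `m` exponentials, at the price of `log m`.

Hence the regret is at most `A + B₁ log X₁ + log X₂ + B₃ log X₃` with `𝔼 Xₖ ≤ 1`. By concavity of
`log` this is at most `A + B log Y` for a single positive `Y` with `𝔼 Y ≤ 1` and `B = B₁ + 1 + B₃`;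
`log y ≤ y - 1` and Markov's inequality then give the two bounds (`bounds_of_le_log`).
-/

open MeasureTheory ProbabilityTheory
open scoped BigOperators

/-! ### Scalar inequalities and entropic mirror descent -/

theorem exp_neg_le_quadratic {x : ℝ} (hx : 0 ≤ x) : Real.exp (-x) ≤ 1 - x + x ^ 2 / 2 := by
  have h1 := Real.quadratic_le_exp_of_nonneg hx
  have h2 : 0 < Real.exp (-x) := Real.exp_pos _
  have h3 : Real.exp (-x) * Real.exp x = 1 := by rw [← Real.exp_add]; simp
  have h4 : 0 ≤ 1 - x + x ^ 2 / 2 := by nlinarith [sq_nonneg (x - 1)]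
  -- `(1 - x + x²/2)(1 + x + x²/2) = 1 + x⁴/4 ≥ 1 = e⁻ˣ eˣ`
  have h5 : 1 ≤ (1 - x + x ^ 2 / 2) * Real.exp x := by
    nlinarith [mul_le_mul_of_nonneg_left h1 h4, sq_nonneg (x ^ 2)]
  nlinarith [mul_le_mul_of_nonneg_right h5 h2.le]

/-- The scalar inequality behind implicit exploration: the bias `γ` in the denominator compensates
the exponential moment of the importance weight. -/
theorem ix_coeff_le {γ q : ℝ} (hγ : 0 < γ) (hq : 0 ≤ q) :
    q * (Real.exp (2 * γ / (q + γ)) - 1) ≤ 2 * γ := by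
  rcases hq.eq_or_lt with rfl | hq
  · simp; exact hγ.le
  have h := Real.le_log_one_add_of_nonneg (x := 2 * γ / q) (by positivity)
  have e : 2 * (2 * γ / q) / (2 * γ / q + 2) = 2 * γ / (q + γ) := by
    field_simp; ring
  rw [e, Real.le_log_iff_exp_le (by positivity)] at h
  calc q * (Real.exp (2 * γ / (q + γ)) - 1) ≤ q * (2 * γ / q) := by
        apply mul_le_mul_of_nonneg_left _ hq.le; linarith
    _ = 2 * γ := by field_simp

theorem exp_mul_le_chord {u : ℝ} (c : ℝ) (h0 : 0 ≤ u) (h1 : u ≤ 1) :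
    Real.exp (u * c) ≤ 1 + u * (Real.exp c - 1) := by
  have := convexOn_exp.2 (Set.mem_univ c) (Set.mem_univ 0) h0 (sub_nonneg.2 h1) (by ring)
  simp only [smul_eq_mul, mul_zero, add_zero, Real.exp_zero, mul_one] at this
  linarith

theorem exp_mul_le_cosh_add {x : ℝ} (c : ℝ) (h0 : -1 ≤ x) (h1 : x ≤ 1) :
    Real.exp (c * x) ≤ Real.cosh c + x * Real.sinh c := by
  have := convexOn_exp.2 (Set.mem_univ c) (Set.mem_univ (-c))
    (show 0 ≤ (1 + x) / 2 by linarith) (show 0 ≤ (1 - x) / 2 by linarith) (by ring)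
  simp only [smul_eq_mul] at this
  rw [Real.cosh_eq, Real.sinh_eq]
  have e : (1 + x) / 2 * c + (1 - x) / 2 * -c = c * x := by ring
  rw [e] at this
  linarith

/-- A minimiser over the simplex of the entropic mirror-descent objective is the exponential
weights update. -/
theorem mirror_step_eq {m : ℕ} (η : ℝ) (q p s : Fin m → ℝ) (hqpos : ∀ i, 0 < q i)
    (hq : q ∈ stdSimplex ℝ (Fin m)) (hp : p ∈ stdSimplex ℝ (Fin m))
    (hmin : IsMinOn (fun a : Fin m → ℝ => η * (∑ i, s i * (a i - q i)) +
      ∑ i, (a i * Real.log (a i) - q i * Real.log (q i) -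
        (Real.log (q i) + 1) * (a i - q i))) (stdSimplex ℝ (Fin m)) p) (i : Fin m) :
    p i = q i * Real.exp (-(η * s i)) / ∑ k, q k * Real.exp (-(η * s k)) := by
  set Zn := ∑ k, q k * Real.exp (-(η * s k)) with hZn
  have hZpos : 0 < Zn :=
    Finset.sum_pos (fun k _ => mul_pos (hqpos k) (Real.exp_pos _)) ⟨i, Finset.mem_univ i⟩
  set r : Fin m → ℝ := fun k => q k * Real.exp (-(η * s k)) / Zn with hr
  have hrpos : ∀ k, 0 < r k := fun k => div_pos (mul_pos (hqpos k) (Real.exp_pos _)) hZpos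
  have hrs : r ∈ stdSimplex ℝ (Fin m) := by
    refine ⟨fun k => (hrpos k).le, ?_⟩
    simp only [hr]
    rw [← Finset.sum_div, ← hZn, div_self hZpos.ne']
  have hlog : ∀ k, Real.log (r k) = Real.log (q k) - η * s k - Real.log Zn := by
    intro k
    simp only [hr]
    rw [Real.log_div (mul_pos (hqpos k) (Real.exp_pos _)).ne' hZpos.ne',
      Real.log_mul (hqpos k).ne' (Real.exp_pos _).ne', Real.log_exp]
    ring
  -- up to a constant, the objective is the relative entropy with respect to `r`
  have hobj : ∀ a ∈ stdSimplex ℝ (Fin m), η * (∑ i, s i * (a i - q i)) +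
      ∑ i, (a i * Real.log (a i) - q i * Real.log (q i) -
        (Real.log (q i) + 1) * (a i - q i)) =
      ∑ k, a k * (Real.log (a k) - Real.log (r k)) - Real.log Zn - η * ∑ k, s k * q k := by
    intro a ha
    have e1 : ∑ k, a k * (Real.log (a k) - Real.log (r k)) =
        ∑ k, a k * (Real.log (a k) - Real.log (q k) + η * s k) + Real.log Zn := by
      have : Real.log Zn = ∑ k, a k * Real.log Zn := by rw [← Finset.sum_mul, ha.2, one_mul]
      conv_rhs => rw [this]
      rw [← Finset.sum_add_distrib]
      exact Finset.sum_congr rfl fun k _ => by rw [hlog]; ring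
    have e2 : ∑ k, (a k - q k) = 0 := by rw [Finset.sum_sub_distrib, ha.2, hq.2, sub_self]
    rw [e1, ← sub_eq_zero, Finset.mul_sum, Finset.mul_sum, ← Finset.sum_add_distrib,
      add_sub_cancel_right, sub_sub_eq_add_sub, ← Finset.sum_add_distrib,
      ← Finset.sum_sub_distrib, ← neg_eq_zero, ← e2, ← Finset.sum_neg_distrib]
    exact Finset.sum_congr rfl fun k _ => by ring
  have hle := hmin hrs
  simp only [Set.mem_ofPred_eq] at hle
  rw [hobj p hp, hobj r hrs] at hle
  simp only [sub_self, mul_zero, Finset.sum_const_zero] at hle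
  have hkl : ∀ k, r k * InformationTheory.klFun (p k / r k) =
      p k * (Real.log (p k) - Real.log (r k)) + (r k - p k) := by
    intro k
    unfold InformationTheory.klFun
    have hne := (hrpos k).ne'
    rcases eq_or_ne (p k) 0 with h0 | h0
    · simp [h0]
    · rw [Real.log_div h0 hne]; field_simp; ring
  have hsum : ∑ k, r k * InformationTheory.klFun (p k / r k) ≤ 0 := by
    simp only [hkl]
    rw [Finset.sum_add_distrib, Finset.sum_sub_distrib, hrs.2, hp.2]
    linarith
  have hnn : ∀ k ∈ Finset.univ, 0 ≤ r k * InformationTheory.klFun (p k / r k) := fun k _ =>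
    mul_nonneg (hrpos k).le (InformationTheory.klFun_nonneg (div_nonneg (hp.1 k) (hrpos k).le))
  have hz := (Finset.sum_eq_zero_iff_of_nonneg hnn).1
    (le_antisymm hsum (Finset.sum_nonneg hnn)) i (Finset.mem_univ i)
  have := (mul_eq_zero.1 hz).resolve_left (hrpos i).ne'
  rw [InformationTheory.klFun_eq_zero_iff (div_nonneg (hp.1 i) (hrpos i).le),
    div_eq_one_iff_eq (hrpos i).ne'] at this
  exact this

/-- Potential argument for exponential weights: along the updates, the log-weight of every
coordinate `j` grows by at least the instantaneous regret against `j`, minus a second-order term. -/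
theorem mirror_log_weight {m : ℕ} (hm : 0 < m) (T : ℕ) (η : ℝ) (hη : 0 < η) (q s : ℕ → Fin m → ℝ)
    (hs : ∀ t i, 0 ≤ s t i) (hq1 : q 1 = fun _ => (m : ℝ)⁻¹)
    (hq : ∀ t ∈ Finset.Icc 1 T, q t ∈ stdSimplex ℝ (Fin m))
    (hupd : ∀ t ∈ Finset.Icc 1 T, q (t + 1) ∈ stdSimplex ℝ (Fin m) ∧
      IsMinOn (fun a : Fin m → ℝ => η * (∑ i, s t i * (a i - q t i)) +
      ∑ i, (a i * Real.log (a i) - q t i * Real.log (q t i) -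
        (Real.log (q t i) + 1) * (a i - q t i))) (stdSimplex ℝ (Fin m)) (q (t + 1)))
    (n : ℕ) (hn : n ≤ T) :
    (∀ i, 0 < q (n + 1) i) ∧ ∀ j, -Real.log m + ∑ t ∈ Finset.Icc 1 n,
      (η * ((∑ i, q t i * s t i) - s t j) - η ^ 2 / 2 * ∑ i, q t i * s t i ^ 2) ≤
        Real.log (q (n + 1) j) := by
  induction n with
  | zero => simp [hq1, hm]
  | succ n ih =>
    obtain ⟨hpos, hlog⟩ := ih (by omega)
    have hmem : n + 1 ∈ Finset.Icc 1 T := Finset.mem_Icc.2 ⟨by omega, hn⟩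
    have hstep := mirror_step_eq η (q (n + 1)) (q (n + 1 + 1)) (s (n + 1)) hpos (hq _ hmem)
      (hupd _ hmem).1 (hupd _ hmem).2
    have hnum : ∀ i, 0 < q (n + 1) i * Real.exp (-(η * s (n + 1) i)) := fun i =>
      mul_pos (hpos i) (Real.exp_pos _)
    have hZ : 0 < ∑ k, q (n + 1) k * Real.exp (-(η * s (n + 1) k)) :=
      Finset.sum_pos (fun k _ => hnum k) ⟨⟨0, hm⟩, Finset.mem_univ _⟩
    refine ⟨fun i => by rw [hstep]; exact div_pos (hnum i) hZ, fun j => ?_⟩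
    rw [Finset.sum_Icc_succ_top (by omega), hstep, Real.log_div (hnum j).ne' hZ.ne',
      Real.log_mul (hpos j).ne' (Real.exp_pos _).ne', Real.log_exp]
    have hZle : ∑ k, q (n + 1) k * Real.exp (-(η * s (n + 1) k)) ≤
        1 - η * ∑ i, q (n + 1) i * s (n + 1) i +
          η ^ 2 / 2 * ∑ i, q (n + 1) i * s (n + 1) i ^ 2 := by
      have h1 : (1 : ℝ) = ∑ k, q (n + 1) k := (hq _ hmem).2.symm
      rw [h1, Finset.mul_sum, Finset.mul_sum, ← Finset.sum_sub_distrib, ← Finset.sum_add_distrib]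
      refine Finset.sum_le_sum fun k _ => ?_
      have := mul_le_mul_of_nonneg_left
        (exp_neg_le_quadratic (mul_nonneg hη.le (hs (n + 1) k))) (hpos k).le
      linarith
    have hlogZ := Real.log_le_sub_one_of_pos hZ
    have := hlog j
    linarith

theorem mirror_regret {m : ℕ} (hm : 0 < m) (T : ℕ) (η : ℝ) (hη : 0 < η) (q s : ℕ → Fin m → ℝ)
    (hs : ∀ t i, 0 ≤ s t i) (hq1 : q 1 = fun _ => (m : ℝ)⁻¹)
    (hq : ∀ t ∈ Finset.Icc 1 T, q t ∈ stdSimplex ℝ (Fin m))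
    (hupd : ∀ t ∈ Finset.Icc 1 T, q (t + 1) ∈ stdSimplex ℝ (Fin m) ∧
      IsMinOn (fun a : Fin m → ℝ => η * (∑ i, s t i * (a i - q t i)) +
      ∑ i, (a i * Real.log (a i) - q t i * Real.log (q t i) -
        (Real.log (q t i) + 1) * (a i - q t i))) (stdSimplex ℝ (Fin m)) (q (t + 1)))
    (hT : 1 ≤ T) (j : Fin m) :
    η * ∑ t ∈ Finset.Icc 1 T, ((∑ i, q t i * s t i) - s t j) ≤
      Real.log m + η ^ 2 / 2 * ∑ t ∈ Finset.Icc 1 T, ∑ i, q t i * s t i ^ 2 := by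
  obtain ⟨hpos, hlog⟩ := mirror_log_weight hm T η hη q s hs hq1 hq hupd T le_rfl
  have hsx := (hupd T (Finset.mem_Icc.2 ⟨hT, le_rfl⟩)).1
  have h1 : q (T + 1) j ≤ 1 := by
    rw [← hsx.2]
    exact Finset.single_le_sum (fun i _ => hsx.1 i) (Finset.mem_univ j)
  have h2 := Real.log_nonpos (hpos j).le h1
  have h3 := hlog j
  rw [Finset.sum_sub_distrib, ← Finset.mul_sum, ← Finset.mul_sum] at h3
  linarith

/-! ### Conditioning and exponential supermartingales -/

theorem integrable_of_abs_le {Ω : Type*} [MeasurableSpace Ω] {μ : Measure Ω} [IsFiniteMeasure μ]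
    {f : Ω → ℝ} (hf : Measurable f) (C : ℝ) (h : ∀ ω, |f ω| ≤ C) : Integrable f μ :=
  Integrable.of_bound hf.aestronglyMeasurable C (Filter.Eventually.of_forall h)

/-- A bounded `𝓖`-measurable factor does not see the difference between `f` and a version `e` of
its conditional expectation. -/
theorem integral_mul_eq_of_condExp {Ω : Type*} {𝓖 m0 : MeasurableSpace Ω} {μ : Measure Ω}
    [IsProbabilityMeasure μ] (hG : 𝓖 ≤ m0) {g f e : Ω → ℝ}
    (hg : Measurable[𝓖] g) {C : ℝ} (hgC : ∀ ω, |g ω| ≤ C) (hf : Measurable f)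
    (hf1 : ∀ ω, |f ω| ≤ 1) (he : μ[f | 𝓖] =ᵐ[μ] e) :
    ∫ ω, g ω * f ω ∂μ = ∫ ω, g ω * e ω ∂μ := by
  have hgm : Measurable g := hg.mono hG le_rfl
  have hfi : Integrable f μ := integrable_of_abs_le hf 1 hf1
  have hgf : Integrable (g * f) μ := by
    refine integrable_of_abs_le (hgm.mul hf) C fun ω => ?_
    rw [Pi.mul_apply, abs_mul]
    exact (mul_le_of_le_one_right (abs_nonneg _) (hf1 ω)).trans (hgC ω)
  have h1 := condExp_mul_of_stronglyMeasurable_left hg.stronglyMeasurable hgf hfi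
  calc ∫ ω, g ω * f ω ∂μ = ∫ ω, (μ[g * f | 𝓖]) ω ∂μ := (integral_condExp hG).symm
    _ = ∫ ω, g ω * e ω ∂μ := by
      refine integral_congr_ae ?_
      filter_upwards [h1, he] with ω h1 h2
      rw [h1, Pi.mul_apply, h2]

/-- Sampling identity for one round: against a nonnegative bounded past-measurable weight `h`, the
gain observed when arm `i` is drawn has conditional mean `q i` times the mean gain of arm `i`.
Weighting `μ` by `h` on the event that arm `i` is drawn makes the joint law of `(w, z)` a product
measure, so the claim follows from Fubini. -/
theorem sampling_identity {W Z Ω : Type*} [MeasurableSpace W] [MeasurableSpace Z] {m : ℕ}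
    {𝓖 𝓗 m0 : MeasurableSpace Ω} {μ : Measure Ω} [IsProbabilityMeasure μ]
    (P : Fin m → Measure Z) (hP : ∀ i, IsProbabilityMeasure (P i))
    (c : W → Z → ℝ) (hc : Measurable (Function.uncurry c)) (hc01 : ∀ w z, c w z ∈ Set.Icc (0 : ℝ) 1)
    (hG𝓗 : 𝓖 ≤ 𝓗) (hH : 𝓗 ≤ m0) {w : Ω → W} (hw : Measurable[𝓖] w)
    {q : Ω → Fin m → ℝ} {I : Ω → Fin m} (hI𝓗 : Measurable[𝓗] I)
    (hI_law : ∀ i, μ[(fun ω => if I ω = i then (1 : ℝ) else 0) | 𝓖] =ᵐ[μ] fun ω => q ω i)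
    {z : Ω → Z} (hz : Measurable z)
    (hz_law : ∀ f : Z → ℝ, Measurable f → (∀ z, |f z| ≤ 1) →
      μ[(fun ω => f (z ω)) | 𝓗] =ᵐ[μ] fun ω => ∫ z, f z ∂(P (I ω)))
    (i : Fin m) {h : Ω → ℝ} (hh : Measurable[𝓖] h) (h0 : ∀ ω, 0 ≤ h ω) {C : ℝ}
    (hC : ∀ ω, h ω ≤ C) :
    ∫ ω, h ω * ((if I ω = i then 1 else 0) * c (w ω) (z ω)) ∂μ =
      ∫ ω, h ω * (q ω i * ∫ x, c (w ω) x ∂(P i)) ∂μ := by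
  have hG : 𝓖 ≤ m0 := hG𝓗.trans hH
  have hw' : Measurable w := hw.mono hG le_rfl
  have hh' : Measurable h := hh.mono hG le_rfl
  have hind𝓗 : Measurable[𝓗] (fun ω => if I ω = i then (1 : ℝ) else 0) :=
    Measurable.ite (hI𝓗 (measurableSet_singleton i)) measurable_const measurable_const
  have hind : Measurable (fun ω => if I ω = i then (1 : ℝ) else 0) := hind𝓗.mono hH le_rfl
  have hind01 : ∀ ω, |if I ω = i then (1 : ℝ) else 0| ≤ 1 := fun ω => by split_ifs <;> simp
  set g : Ω → ℝ := fun ω => h ω * (if I ω = i then (1 : ℝ) else 0) with hg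
  have hg𝓗 : Measurable[𝓗] g := (hh.mono hG𝓗 le_rfl).mul hind𝓗
  have hgm : Measurable g := hg𝓗.mono hH le_rfl
  have hg0 : ∀ ω, 0 ≤ g ω := fun ω => mul_nonneg (h0 ω) (by split_ifs <;> simp)
  have hgC : ∀ ω, g ω ≤ C := fun ω => by
    simp only [hg]
    split_ifs
    · simpa using hC ω
    · simpa using (h0 ω).trans (hC ω)
  have hgi : Integrable g μ :=
    integrable_of_abs_le hgm C fun ω => by rw [abs_of_nonneg (hg0 ω)]; exact hgC ω
  set ν : Measure Ω := μ.withDensity (fun ω => ENNReal.ofReal (g ω)) with hν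
  have : IsFiniteMeasure ν := isFiniteMeasure_withDensity_ofReal hgi.2
  have hνint : ∀ f : Ω → ℝ, ∫ ω, f ω ∂ν = ∫ ω, g ω * f ω ∂μ := fun f => by
    rw [hν, integral_withDensity_eq_integral_toReal_smul hgm.ennreal_ofReal (by simp)]
    refine integral_congr_ae (Filter.Eventually.of_forall fun ω => ?_)
    simp [ENNReal.toReal_ofReal (hg0 ω)]
  have hwz : Measurable fun ω => (w ω, z ω) := hw'.prodMk hz
  have hprod : (ν.map w).prod (P i) = ν.map (fun ω => (w ω, z ω)) := by
    refine Measure.prod_eq fun A B hA hB => ?_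
    rw [Measure.map_apply hwz (hA.prod hB), Measure.map_apply hw' hA]
    have e1 : (fun ω => (w ω, z ω)) ⁻¹' (A ×ˢ B) = w ⁻¹' A ∩ z ⁻¹' B := by ext; simp
    rw [e1, ← ENNReal.toReal_eq_toReal_iff' (measure_ne_top _ _)
      (ENNReal.mul_ne_top (measure_ne_top _ _) (measure_ne_top _ _)), ENNReal.toReal_mul]
    change ν.real _ = ν.real _ * (P i).real B
    have hwA := hw' hA
    rw [← integral_indicator_one (hwA.inter (hz hB)), ← integral_indicator_one hwA, hνint, hνint]
    have key := integral_mul_eq_of_condExp (μ := μ) hH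
      (g := fun ω => g ω * (w ⁻¹' A).indicator 1 ω) (C := C)
      (hg𝓗.mul (Measurable.indicator (@measurable_const _ _ _ 𝓗 1) (hw.mono hG𝓗 le_rfl hA)))
      (fun ω => by
        by_cases hω : ω ∈ w ⁻¹' A
        · simp only [Set.indicator_of_mem hω, Pi.one_apply, mul_one, abs_of_nonneg (hg0 ω)]
          exact hgC ω
        · simpa only [Set.indicator_of_notMem hω, mul_zero, abs_zero] using (hg0 ω).trans (hgC ω))
      (f := fun ω => B.indicator (fun _ => (1 : ℝ)) (z ω))
      ((measurable_const.indicator hB).comp hz)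
      (fun ω => by by_cases hb : z ω ∈ B <;> simp [hb])
      (hz_law _ (measurable_const.indicator hB)
        (fun x => by by_cases hb : x ∈ B <;> simp [hb]))
    calc ∫ ω, g ω * (w ⁻¹' A ∩ z ⁻¹' B).indicator 1 ω ∂μ
        = ∫ ω, g ω * (w ⁻¹' A).indicator 1 ω * B.indicator (fun _ => (1 : ℝ)) (z ω) ∂μ := by
          refine integral_congr_ae (Filter.Eventually.of_forall fun ω => ?_)
          by_cases ha : w ω ∈ A <;> by_cases hb : z ω ∈ B <;> simp [Set.indicator, ha, hb]
      _ = _ := key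
      _ = ∫ ω, g ω * (w ⁻¹' A).indicator 1 ω * (P i).real B ∂μ := by
          refine integral_congr_ae (Filter.Eventually.of_forall fun ω => ?_)
          by_cases hi : I ω = i
          · simp only [hi]
            rw [integral_indicator_const _ hB]; simp
          · simp [hg, hi]
      _ = _ := integral_mul_const _ _
  have hcb : ∀ x : W × Z, |Function.uncurry c x| ≤ 1 := fun x => by
    change |c x.1 x.2| ≤ 1
    rw [abs_of_nonneg (hc01 x.1 x.2).1]
    exact (hc01 x.1 x.2).2
  have hrm : Measurable fun v => ∫ x, c v x ∂(P i) :=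
    (hc.stronglyMeasurable.integral_prod_right).measurable
  have hr0 : ∀ v, 0 ≤ ∫ x, c v x ∂(P i) := fun v => integral_nonneg fun x => (hc01 v x).1
  have hr1 : ∀ v, ∫ x, c v x ∂(P i) ≤ 1 := fun v => by
    have := integral_mono_of_nonneg (μ := P i) (Filter.Eventually.of_forall fun x => (hc01 v x).1)
      (integrable_const (1 : ℝ)) (Filter.Eventually.of_forall fun x => (hc01 v x).2)
    simpa using this
  calc ∫ ω, h ω * ((if I ω = i then 1 else 0) * c (w ω) (z ω)) ∂μ
      = ∫ ω, g ω * c (w ω) (z ω) ∂μ :=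
        integral_congr_ae (Filter.Eventually.of_forall fun ω => (mul_assoc _ _ _).symm)
    _ = ∫ ω, c (w ω) (z ω) ∂ν := (hνint _).symm
    _ = ∫ x, Function.uncurry c x ∂(ν.map (fun ω => (w ω, z ω))) :=
        (integral_map hwz.aemeasurable hc.aestronglyMeasurable).symm
    _ = ∫ v, ∫ x, c v x ∂(P i) ∂(ν.map w) := by
        rw [← hprod, integral_prod _ (integrable_of_abs_le hc 1 hcb)]
        rfl
    _ = ∫ ω, ∫ x, c (w ω) x ∂(P i) ∂ν :=
        integral_map hw'.aemeasurable hrm.aestronglyMeasurable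
    _ = ∫ ω, g ω * ∫ x, c (w ω) x ∂(P i) ∂μ := hνint _
    _ = ∫ ω, (h ω * ∫ x, c (w ω) x ∂(P i)) * (if I ω = i then 1 else 0) ∂μ :=
        integral_congr_ae (Filter.Eventually.of_forall fun ω => by simp only [hg]; ring)
    _ = ∫ ω, (h ω * ∫ x, c (w ω) x ∂(P i)) * q ω i ∂μ :=
        integral_mul_eq_of_condExp hG (hh.mul (hrm.comp hw)) (C := C)
          (fun ω => by
            rw [abs_of_nonneg (mul_nonneg (h0 ω) (hr0 _))]
            exact (mul_le_of_le_one_right (h0 ω) (hr1 _)).trans (hC ω))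
          hind hind01 (hI_law i)
    _ = _ := integral_congr_ae (Filter.Eventually.of_forall fun ω => by ring)

/-- If each factor `exp (ξ t)` has conditional mean at most one given the past (tested against
nonnegative bounded weights), so does the product. -/
theorem integral_exp_sum_le_one {Ω : Type*} {m0 : MeasurableSpace Ω} {μ : Measure Ω}
    [IsProbabilityMeasure μ] (F : ℕ → MeasurableSpace Ω) (hFmono : Monotone F)
    (T : ℕ) (ξ : ℕ → Ω → ℝ)
    (hmeas : ∀ t ∈ Finset.Icc 1 T, Measurable[F t] (ξ t))
    (C : ℝ) (hC : ∀ t ∈ Finset.Icc 1 T, ∀ ω, ξ t ω ≤ C)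
    (hstep : ∀ t ∈ Finset.Icc 1 T, ∀ h : Ω → ℝ, Measurable[F (t - 1)] h → (∀ ω, 0 ≤ h ω) →
      ∀ D : ℝ, (∀ ω, h ω ≤ D) → ∫ ω, h ω * Real.exp (ξ t ω) ∂μ ≤ ∫ ω, h ω ∂μ) (n : ℕ)
    (hn : n ≤ T) :
    Measurable[F n] (fun ω => Real.exp (∑ t ∈ Finset.Icc 1 n, ξ t ω)) ∧
    (∀ ω, Real.exp (∑ t ∈ Finset.Icc 1 n, ξ t ω) ≤ Real.exp (n * C)) ∧
    ∫ ω, Real.exp (∑ t ∈ Finset.Icc 1 n, ξ t ω) ∂μ ≤ 1 := by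
  induction n with
  | zero => refine ⟨?_, ?_, ?_⟩ <;> simp
  | succ n ih =>
    obtain ⟨h1, h2, h3⟩ := ih (by omega)
    have hmem : n + 1 ∈ Finset.Icc 1 T := Finset.mem_Icc.2 ⟨by omega, hn⟩
    have e : (fun ω => Real.exp (∑ t ∈ Finset.Icc 1 (n + 1), ξ t ω)) = fun ω =>
        Real.exp (∑ t ∈ Finset.Icc 1 n, ξ t ω) * Real.exp (ξ (n + 1) ω) := by
      funext ω
      rw [Finset.sum_Icc_succ_top (by omega), Real.exp_add]
    refine ⟨?_, fun ω => ?_, ?_⟩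
    · rw [e]
      exact (h1.mono (hFmono (Nat.le_succ n)) le_rfl).mul
        (Real.measurable_exp.comp (hmeas _ hmem))
    · rw [congrFun e ω]
      calc _ ≤ Real.exp (n * C) * Real.exp C :=
            mul_le_mul (h2 ω) (Real.exp_le_exp.2 (hC _ hmem ω)) (Real.exp_pos _).le
              (Real.exp_pos _).le
        _ = _ := by rw [← Real.exp_add]; push_cast; ring_nf
    · rw [e]
      exact (hstep _ hmem _ h1 (fun ω => (Real.exp_pos _).le) _ h2).trans h3

/-! ### One-round exponential moments -/

/-- The conditional exponential moment of the implicit-exploration error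
`∑ i, α i * (s̃ i - r i)`, with weights `α i ∈ [0, 1]` and scale `2 * γ`, is at most one. Here `g` is
the observed gain and `r` the vector of mean gains. -/
theorem ix_step {Ω : Type*} {m : ℕ} {𝓖 m0 : MeasurableSpace Ω} {μ : Measure Ω}
    [IsProbabilityMeasure μ] (hG : 𝓖 ≤ m0) {q r : Ω → Fin m → ℝ}
    (hq : Measurable[𝓖] q) (hq0 : ∀ ω i, 0 ≤ q ω i)
    (hr : Measurable[𝓖] r) (hr0 : ∀ ω i, 0 ≤ r ω i)
    {I : Ω → Fin m} (hI : Measurable I) {g : Ω → ℝ} (hg : Measurable g) (hg0 : ∀ ω, 0 ≤ g ω)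
    (hg1 : ∀ ω, g ω ≤ 1)
    (hsamp : ∀ i, ∀ h : Ω → ℝ, Measurable[𝓖] h → (∀ ω, 0 ≤ h ω) → ∀ C : ℝ, (∀ ω, h ω ≤ C) →
      ∫ ω, h ω * ((if I ω = i then 1 else 0) * g ω) ∂μ = ∫ ω, h ω * (q ω i * r ω i) ∂μ)
    (hqr : ∀ ω i, q ω i * r ω i ≤ 1)
    {γ : ℝ} (hγ : 0 < γ) {α : Fin m → ℝ} (hα0 : ∀ i, 0 ≤ α i) (hα1 : ∀ i, α i ≤ 1)
    {h : Ω → ℝ} (hh : Measurable[𝓖] h) (h0 : ∀ ω, 0 ≤ h ω) {D : ℝ} (hD : ∀ ω, h ω ≤ D) :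
    ∫ ω, h ω * Real.exp (2 * γ * ∑ i, α i *
      (g ω / (q ω i + γ) * (if I ω = i then 1 else 0) - r ω i)) ∂μ ≤ ∫ ω, h ω ∂μ := by
  have hqi : ∀ i, Measurable[𝓖] fun ω => q ω i := fun i => (measurable_pi_apply i).comp hq
  have hri : ∀ i, Measurable[𝓖] fun ω => r ω i := fun i => (measurable_pi_apply i).comp hr
  set k : Fin m → Ω → ℝ := fun i ω => Real.exp (2 * γ / (q ω i + γ)) - 1 with hk
  have hkm : ∀ i, Measurable[𝓖] (k i) := fun i =>
    (Real.measurable_exp.comp (((hqi i).add_const γ).const_div _)).sub_const 1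
  have hk0 : ∀ i ω, 0 ≤ k i ω := fun i ω => by
    have : 0 ≤ 2 * γ / (q ω i + γ) := div_nonneg (by linarith) (by linarith [hq0 ω i])
    have := Real.add_one_le_exp (2 * γ / (q ω i + γ))
    simp only [hk]; linarith
  have hk1 : ∀ i ω, k i ω ≤ Real.exp 2 := fun i ω => by
    have h1 : 2 * γ / (q ω i + γ) ≤ 2 := by
      rw [div_le_iff₀ (by linarith [hq0 ω i])]; nlinarith [hq0 ω i]
    have := Real.exp_le_exp.2 h1
    simp only [hk]; linarith
  set a : Ω → ℝ := fun ω => 2 * γ * ∑ i, α i * r ω i with ha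
  have ham : Measurable[𝓖] a :=
    Measurable.const_mul (Finset.measurable_sum _ fun i _ => (hri i).const_mul _) _
  have ha0 : ∀ ω, 0 ≤ a ω := fun ω => mul_nonneg (by linarith)
    (Finset.sum_nonneg fun i _ => mul_nonneg (hα0 i) (hr0 ω i))
  set h' : Ω → ℝ := fun ω => h ω * Real.exp (-a ω) with hh'
  have hm' : Measurable[𝓖] h' := hh.mul (Real.measurable_exp.comp ham.neg)
  have h0' : ∀ ω, 0 ≤ h' ω := fun ω => mul_nonneg (h0 ω) (Real.exp_pos _).le
  have hD' : ∀ ω, h' ω ≤ D := fun ω =>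
    (mul_le_of_le_one_right (h0 ω) (Real.exp_le_one_iff.2 (by linarith [ha0 ω]))).trans (hD ω)
  have hhkm : ∀ i, Measurable[𝓖] fun ω => h' ω * k i ω := fun i => hm'.mul (hkm i)
  have hhk0 : ∀ i ω, 0 ≤ h' ω * k i ω := fun i ω => mul_nonneg (h0' ω) (hk0 i ω)
  have hhkD : ∀ i ω, h' ω * k i ω ≤ D * Real.exp 2 := fun i ω =>
    mul_le_mul (hD' ω) (hk1 i ω) (hk0 i ω) ((h0' ω).trans (hD' ω))
  have hindm : ∀ i, Measurable (fun ω => (if I ω = i then (1 : ℝ) else 0) * g ω) := fun i =>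
    (Measurable.ite (hI (measurableSet_singleton i)) measurable_const measurable_const).mul hg
  have hind0 : ∀ i ω, 0 ≤ (if I ω = i then (1 : ℝ) else 0) * g ω := fun i ω =>
    mul_nonneg (by split_ifs <;> simp) (hg0 ω)
  have hind1 : ∀ i ω, (if I ω = i then (1 : ℝ) else 0) * g ω ≤ 1 := fun i ω => by
    split_ifs
    · simpa using hg1 ω
    · simp
  have hint' : Integrable h' μ := integrable_of_abs_le (hm'.mono hG le_rfl) D fun ω => by
    rw [abs_of_nonneg (h0' ω)]; exact hD' ω
  have hint1 : ∀ i, Integrable (fun ω => h' ω * k i ω *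
      ((if I ω = i then (1 : ℝ) else 0) * g ω)) μ := fun i =>
    integrable_of_abs_le (((hhkm i).mono hG le_rfl).mul (hindm i)) (D * Real.exp 2) fun ω => by
      rw [abs_of_nonneg (mul_nonneg (hhk0 i ω) (hind0 i ω))]
      exact (mul_le_of_le_one_right (hhk0 i ω) (hind1 i ω)).trans (hhkD i ω)
  have hint2 : ∀ i, Integrable (fun ω => h' ω * k i ω * (q ω i * r ω i)) μ := fun i =>
    integrable_of_abs_le ((((hhkm i).mul ((hqi i).mul (hri i)))).mono hG le_rfl)
      (D * Real.exp 2) fun ω => by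
      rw [abs_of_nonneg (mul_nonneg (hhk0 i ω) (mul_nonneg (hq0 ω i) (hr0 ω i)))]
      exact (mul_le_of_le_one_right (hhk0 i ω) (hqr ω i)).trans (hhkD i ω)
  calc _ ≤ ∫ ω, (h' ω + ∑ i, α i * (h' ω * k i ω *
          ((if I ω = i then (1 : ℝ) else 0) * g ω))) ∂μ := by
        refine integral_mono_of_nonneg
          (Filter.Eventually.of_forall fun ω => mul_nonneg (h0 ω) (Real.exp_pos _).le)
          (hint'.add (integrable_finsetSum _ fun i _ => (hint1 i).const_mul _))
          (Filter.Eventually.of_forall fun ω => ?_)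
        have e1 : 2 * γ * ∑ i, α i * (g ω / (q ω i + γ) * (if I ω = i then 1 else 0) - r ω i) =
            -a ω + α (I ω) * g ω * (2 * γ / (q ω (I ω) + γ)) := by
          simp only [mul_sub, Finset.sum_sub_distrib, ha, mul_ite, mul_one, mul_zero,
            Finset.sum_ite_eq, Finset.mem_univ, if_true]
          ring
        have e2 : ∑ i, α i * (h' ω * k i ω * ((if I ω = i then (1 : ℝ) else 0) * g ω)) =
            h' ω * (α (I ω) * g ω * k (I ω) ω) := by
          simp only [ite_mul, one_mul, zero_mul, mul_ite, mul_zero,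
            Finset.sum_ite_eq, Finset.mem_univ, if_true]
          ring
        simp only [e1, e2]
        rw [Real.exp_add, ← mul_assoc]
        have h3 := exp_mul_le_chord (u := α (I ω) * g ω) (2 * γ / (q ω (I ω) + γ))
          (mul_nonneg (hα0 _) (hg0 ω)) (mul_le_one₀ (hα1 _) (hg0 ω) (hg1 ω))
        have h4 := mul_le_mul_of_nonneg_left h3 (h0' ω)
        simp only [hh', hk] at h4 ⊢
        linarith
    _ = ∫ ω, (h' ω + ∑ i, α i * (h' ω * k i ω * (q ω i * r ω i))) ∂μ := by
        rw [integral_add hint' (integrable_finsetSum _ fun i _ => (hint1 i).const_mul _),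
          integral_add hint' (integrable_finsetSum _ fun i _ => (hint2 i).const_mul _),
          integral_finsetSum _ fun i _ => (hint1 i).const_mul _,
          integral_finsetSum _ fun i _ => (hint2 i).const_mul _]
        congr 1
        refine Finset.sum_congr rfl fun i _ => ?_
        rw [integral_const_mul, integral_const_mul,
          hsamp i _ (hhkm i) (hhk0 i) _ (hhkD i)]
    _ ≤ ∫ ω, h ω ∂μ := by
        refine integral_mono_of_nonneg
          (Filter.Eventually.of_forall fun ω => add_nonneg (h0' ω) (Finset.sum_nonneg fun i _ =>
            mul_nonneg (hα0 i) (mul_nonneg (hhk0 i ω) (mul_nonneg (hq0 ω i) (hr0 ω i)))))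
          (integrable_of_abs_le (hh.mono hG le_rfl) D fun ω => by
            rw [abs_of_nonneg (h0 ω)]; exact hD ω)
          (Filter.Eventually.of_forall fun ω => ?_)
        have h1 : ∑ i, α i * (h' ω * k i ω * (q ω i * r ω i)) ≤ h' ω * a ω := by
          simp only [ha, Finset.mul_sum]
          refine Finset.sum_le_sum fun i _ => ?_
          have h2 := mul_le_mul_of_nonneg_left (ix_coeff_le hγ (hq0 ω i))
            (mul_nonneg (h0' ω) (mul_nonneg (hα0 i) (hr0 ω i)))
          simp only [hk]
          linarith
        have h2 : h' ω * (1 + a ω) ≤ h ω := by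
          have h5 := mul_le_mul_of_nonneg_left (Real.add_one_le_exp (a ω)) (h0' ω)
          have h6 : h' ω * Real.exp (a ω) = h ω := by
            simp only [hh']
            rw [mul_assoc, ← Real.exp_add]; simp
          linarith
        change h' ω + _ ≤ h ω
        linarith

/-- The conditional exponential moment of the deviation of the observed gain `g` from its
conditional mean `∑ i, q i * r i` is sub-Gaussian with variance proxy one. -/
theorem azuma_step {Ω : Type*} {m : ℕ} {𝓖 m0 : MeasurableSpace Ω} {μ : Measure Ω}
    [IsProbabilityMeasure μ] (hG : 𝓖 ≤ m0) {q r : Ω → Fin m → ℝ}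
    (hq : Measurable[𝓖] q) (hq0 : ∀ ω i, 0 ≤ q ω i)
    (hr : Measurable[𝓖] r) (hr0 : ∀ ω i, 0 ≤ r ω i) (hmean : ∀ ω, ∑ i, q ω i * r ω i ≤ 1)
    {I : Ω → Fin m} (hI : Measurable I) {g : Ω → ℝ} (hg : Measurable g) (hg0 : ∀ ω, 0 ≤ g ω)
    (hg1 : ∀ ω, g ω ≤ 1)
    (hsamp : ∀ i, ∀ h : Ω → ℝ, Measurable[𝓖] h → (∀ ω, 0 ≤ h ω) → ∀ C : ℝ, (∀ ω, h ω ≤ C) →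
      ∫ ω, h ω * ((if I ω = i then 1 else 0) * g ω) ∂μ = ∫ ω, h ω * (q ω i * r ω i) ∂μ)
    (c : ℝ)
    {h : Ω → ℝ} (hh : Measurable[𝓖] h) (h0 : ∀ ω, 0 ≤ h ω) {D : ℝ} (hD : ∀ ω, h ω ≤ D) :
    ∫ ω, h ω * Real.exp (c * ((∑ i, q ω i * r ω i) - g ω) - c ^ 2 / 2) ∂μ ≤ ∫ ω, h ω ∂μ := by
  have hqi : ∀ i, Measurable[𝓖] fun ω => q ω i := fun i => (measurable_pi_apply i).comp hq
  have hri : ∀ i, Measurable[𝓖] fun ω => r ω i := fun i => (measurable_pi_apply i).comp hr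
  have hm : Measurable h := hh.mono hG le_rfl
  have hp0 : ∀ i ω, 0 ≤ q ω i * r ω i := fun i ω => mul_nonneg (hq0 ω i) (hr0 ω i)
  have hmean0 : ∀ ω, 0 ≤ ∑ i, q ω i * r ω i := fun ω => Finset.sum_nonneg fun i _ => hp0 i ω
  have hindm : ∀ i, Measurable (fun ω => (if I ω = i then (1 : ℝ) else 0) * g ω) := fun i =>
    (Measurable.ite (hI (measurableSet_singleton i)) measurable_const measurable_const).mul hg
  have hind0 : ∀ i ω, 0 ≤ (if I ω = i then (1 : ℝ) else 0) * g ω := fun i ω =>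
    mul_nonneg (by split_ifs <;> simp) (hg0 ω)
  have hind1 : ∀ i ω, (if I ω = i then (1 : ℝ) else 0) * g ω ≤ 1 := fun i ω => by
    split_ifs
    · simpa using hg1 ω
    · simp
  have hint : Integrable h μ := integrable_of_abs_le hm D fun ω => by
    rw [abs_of_nonneg (h0 ω)]; exact hD ω
  have hint1 : ∀ i, Integrable (fun ω => h ω *
      ((if I ω = i then (1 : ℝ) else 0) * g ω)) μ := fun i =>
    integrable_of_abs_le (hm.mul (hindm i)) D fun ω => by
      rw [abs_of_nonneg (mul_nonneg (h0 ω) (hind0 i ω))]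
      exact (mul_le_of_le_one_right (h0 ω) (hind1 i ω)).trans (hD ω)
  have hint2 : ∀ i, Integrable (fun ω => h ω * (q ω i * r ω i)) μ := fun i =>
    integrable_of_abs_le (hm.mul (((hqi i).mul (hri i)).mono hG le_rfl)) D fun ω => by
      rw [abs_of_nonneg (mul_nonneg (h0 ω) (hp0 i ω))]
      exact (mul_le_of_le_one_right (h0 ω) ((Finset.single_le_sum (fun j _ => hp0 j ω)
        (Finset.mem_univ i)).trans (hmean ω))).trans (hD ω)
  have hint3 : ∀ i, Integrable (fun ω => h ω * (q ω i * r ω i) -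
      h ω * ((if I ω = i then (1 : ℝ) else 0) * g ω)) μ := fun i => (hint2 i).sub (hint1 i)
  have hzero : ∫ ω, ∑ i, (h ω * (q ω i * r ω i) -
      h ω * ((if I ω = i then (1 : ℝ) else 0) * g ω)) ∂μ = 0 := by
    rw [integral_finsetSum _ fun i _ => hint3 i]
    refine Finset.sum_eq_zero fun i _ => ?_
    rw [integral_sub (hint2 i) (hint1 i), hsamp i h hh h0 D hD, sub_self]
  have hsumint : Integrable (fun ω => ∑ i, (h ω * (q ω i * r ω i) -
      h ω * ((if I ω = i then (1 : ℝ) else 0) * g ω))) μ :=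
    integrable_finsetSum _ fun i _ => hint3 i
  calc _ ≤ ∫ ω, (h ω + Real.exp (-(c ^ 2 / 2)) * Real.sinh c *
          ∑ i, (h ω * (q ω i * r ω i) -
            h ω * ((if I ω = i then (1 : ℝ) else 0) * g ω))) ∂μ := by
        refine integral_mono_of_nonneg
          (Filter.Eventually.of_forall fun ω => mul_nonneg (h0 ω) (Real.exp_pos _).le)
          (hint.add (hsumint.const_mul _)) (Filter.Eventually.of_forall fun ω => ?_)
        have e1 : ∑ i, (h ω * (q ω i * r ω i) -
            h ω * ((if I ω = i then (1 : ℝ) else 0) * g ω)) =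
            h ω * ((∑ i, q ω i * r ω i) - g ω) := by
          rw [Finset.sum_sub_distrib, ← Finset.mul_sum, ← Finset.mul_sum, ← Finset.sum_mul]
          simp only [Finset.sum_ite_eq, Finset.mem_univ, if_true]
          ring
        simp only [e1]
        set x := (∑ i, q ω i * r ω i) - g ω with hx
        have h1 := exp_mul_le_cosh_add (x := x) c (by linarith [hmean0 ω, hg1 ω])
          (by linarith [hmean ω, hg0 ω])
        have h2 := Real.cosh_le_exp_half_sq c
        have h3 : Real.exp (-(c ^ 2 / 2)) * Real.exp (c ^ 2 / 2) = 1 := by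
          rw [← Real.exp_add]; simp
        have h4 := mul_le_mul_of_nonneg_left (h1.trans (add_le_add_left h2 _))
          (Real.exp_pos (-(c ^ 2 / 2))).le
        rw [mul_add, h3] at h4
        rw [sub_eq_add_neg, Real.exp_add, mul_comm (Real.exp _)]
        have h5 := mul_le_mul_of_nonneg_left h4 (h0 ω)
        linarith
    _ = ∫ ω, h ω ∂μ := by
        rw [integral_add hint (hsumint.const_mul _), integral_const_mul, hzero]
        simp

/-! ### Regret decomposition and concentration -/

/-- Pathwise regret decomposition against arm `j`: the mirror-descent regret on the estimated
losses, the total estimator error, the deviation of the observed gains and the estimator error of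
arm `j`. -/
theorem regret_decomposition {m : ℕ} (hm : 0 < m) (T : ℕ) (hT : 1 ≤ T) (η γ : ℝ) (hη : 0 < η)
    (hγ : γ = η / 2) (q s r : ℕ → Fin m → ℝ) (g : ℕ → ℝ) (I : ℕ → Fin m)
    (hg0 : ∀ t, 0 ≤ g t) (hg1 : ∀ t, g t ≤ 1) (hr1 : ∀ t i, r t i ≤ 1)
    (hs : ∀ t ∈ Finset.Icc 1 T, ∀ i, s t i = g t / (q t i + γ) * (if I t = i then 1 else 0))
    (hq1 : q 1 = fun _ => (m : ℝ)⁻¹)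
    (hq : ∀ t ∈ Finset.Icc 1 T, q t ∈ stdSimplex ℝ (Fin m))
    (hupd : ∀ t ∈ Finset.Icc 1 T, q (t + 1) ∈ stdSimplex ℝ (Fin m) ∧
      IsMinOn (fun a : Fin m → ℝ => η * (∑ i, s t i * (a i - q t i)) +
      ∑ i, (a i * Real.log (a i) - q t i * Real.log (q t i) -
        (Real.log (q t i) + 1) * (a i - q t i))) (stdSimplex ℝ (Fin m)) (q (t + 1)))
    (j : Fin m) :
    η * ∑ t ∈ Finset.Icc 1 T, ((∑ i, q t i * r t i) - r t j) ≤
      Real.log m + η ^ 2 * (m * T) + η * (η * ∑ t ∈ Finset.Icc 1 T, ∑ i, (s t i - r t i)) +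
      η * ∑ t ∈ Finset.Icc 1 T, ((∑ i, q t i * r t i) - g t) +
      η * ∑ t ∈ Finset.Icc 1 T, (s t j - r t j) := by
  have hγ0 : 0 < γ := by linarith
  have hs0 : ∀ t ∈ Finset.Icc 1 T, ∀ i, 0 ≤ s t i := fun t ht i => by
    rw [hs t ht]
    exact mul_nonneg (div_nonneg (hg0 t) (by linarith [(hq t ht).1 i])) (by split_ifs <;> simp)
  -- `mirror_regret` asks for nonnegativity at every time: replace `s` by `0` outside the horizon
  have hmr := mirror_regret hm T η hη q (fun t i => if t ∈ Finset.Icc 1 T then s t i else 0)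
    (fun t i => by
      split_ifs with h
      · exact hs0 t h i
      · exact le_rfl) hq1 hq
    (fun t ht => by simpa only [if_pos ht] using hupd t ht) hT j
  have e0 : ∀ f : ℕ → (Fin m → ℝ) → ℝ, ∑ t ∈ Finset.Icc 1 T,
      f t (fun i => if t ∈ Finset.Icc 1 T then s t i else 0) = ∑ t ∈ Finset.Icc 1 T, f t (s t) :=
    fun f => Finset.sum_congr rfl fun t ht => by simp only [if_pos ht]
  rw [e0 (fun t x => (∑ i, q t i * x i) - x j), e0 (fun t x => ∑ i, q t i * x i ^ 2)] at hmr
  have hden : ∀ t ∈ Finset.Icc 1 T, ∀ i, 0 < q t i + γ := fun t ht i => by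
    linarith [(hq t ht).1 i]
  have hgs : ∀ t ∈ Finset.Icc 1 T, g t = (∑ i, q t i * s t i) + γ * ∑ i, s t i := fun t ht => by
    rw [Finset.mul_sum, ← Finset.sum_add_distrib]
    have : ∀ i, q t i * s t i + γ * s t i = g t * (if I t = i then 1 else 0) := fun i => by
      rw [hs t ht]
      have := (hden t ht i).ne'
      field_simp
    simp only [this, mul_ite, mul_one, mul_zero, Finset.sum_ite_eq, Finset.mem_univ, if_true]
  have hsq : ∑ t ∈ Finset.Icc 1 T, ∑ i, q t i * s t i ^ 2 ≤
      ∑ t ∈ Finset.Icc 1 T, ∑ i, s t i := by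
    refine Finset.sum_le_sum fun t ht => Finset.sum_le_sum fun i _ => ?_
    have h1 : q t i * s t i ≤ 1 := by
      have h2 : (q t i + γ) * s t i = g t * (if I t = i then 1 else 0) := by
        rw [hs t ht]
        have := (hden t ht i).ne'
        field_simp
      have h3 : g t * (if I t = i then 1 else 0) ≤ 1 := by
        split_ifs
        · simpa using hg1 t
        · simp
      nlinarith [hs0 t ht i]
    nlinarith [hs0 t ht i]
  have hS : ∑ t ∈ Finset.Icc 1 T, ∑ i, s t i ≤
      m * T + ∑ t ∈ Finset.Icc 1 T, ∑ i, (s t i - r t i) := by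
    have h1 : ∑ t ∈ Finset.Icc 1 T, ∑ i, r t i ≤ m * T := by
      calc _ ≤ ∑ t ∈ Finset.Icc 1 T, ∑ i : Fin m, (1 : ℝ) :=
            Finset.sum_le_sum fun t _ => Finset.sum_le_sum fun i _ => hr1 t i
        _ = m * T := by simp [mul_comm]
    simp only [Finset.sum_sub_distrib]
    linarith
  have hdec : ∑ t ∈ Finset.Icc 1 T, ((∑ i, q t i * r t i) - r t j) =
      ∑ t ∈ Finset.Icc 1 T, ((∑ i, q t i * r t i) - g t) +
      γ * ∑ t ∈ Finset.Icc 1 T, ∑ i, s t i +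
      ∑ t ∈ Finset.Icc 1 T, ((∑ i, q t i * s t i) - s t j) +
      ∑ t ∈ Finset.Icc 1 T, (s t j - r t j) := by
    rw [Finset.mul_sum, ← Finset.sum_add_distrib, ← Finset.sum_add_distrib,
      ← Finset.sum_add_distrib]
    exact Finset.sum_congr rfl fun t ht => by linarith [hgs t ht]
  have hη2 : 0 < η ^ 2 := by positivity
  have h1 := mul_le_mul_of_nonneg_left hsq (half_pos hη2).le
  have h2 := mul_le_mul_of_nonneg_left hS hη2.le
  rw [hdec, hγ]
  nlinarith

/-- A pathwise bound `X ≤ A + B * log Y` with `Y` of mean at most one yields both an expectation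
bound (through `log y ≤ y - 1`) and a tail bound (through Markov's inequality). -/
theorem bounds_of_le_log {Ω : Type*} {m0 : MeasurableSpace Ω} {μ : Measure Ω}
    [IsProbabilityMeasure μ] {X Y : Ω → ℝ} {A B : ℝ} (hA : 0 ≤ A) (hB : 0 ≤ B)
    (hYm : Measurable Y) (hY : Integrable Y μ) (hY0 : ∀ ω, 0 < Y ω) (hY1 : ∫ ω, Y ω ∂μ ≤ 1)
    (hX : ∀ ω, X ω ≤ A + B * Real.log (Y ω)) :
    (∫ ω, X ω ∂μ ≤ A + 3 * B) ∧ ∀ δ : ℝ, δ ∈ Set.Ioo (0 : ℝ) 1 →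
      ENNReal.ofReal (1 - δ) ≤ μ {ω | X ω ≤ A + B * Real.log (3 / δ)} := by
  constructor
  · by_cases hXi : Integrable X μ
    · have hYi : Integrable (fun ω => B * (Y ω - 1)) μ :=
        (hY.sub (integrable_const 1)).const_mul B
      calc ∫ ω, X ω ∂μ ≤ ∫ ω, (A + B * (Y ω - 1)) ∂μ := by
            refine integral_mono hXi
              ((integrable_const A).add hYi) fun ω => ?_
            have := mul_le_mul_of_nonneg_left (Real.log_le_sub_one_of_pos (hY0 ω)) hB
            linarith [hX ω]
        _ = A + B * (∫ ω, Y ω ∂μ - 1) := by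
            rw [integral_add (integrable_const A) hYi,
              integral_const_mul, integral_sub hY (integrable_const 1)]
            simp
        _ ≤ A + 3 * B := by nlinarith
    -- the junk value `0` of a non-integrable `X` is below the nonnegative bound
    · rw [integral_undef hXi]; positivity
  · rintro δ ⟨hδ0, hδ1⟩
    have hmk := mul_meas_ge_le_integral_of_nonneg
      (Filter.Eventually.of_forall fun ω => (hY0 ω).le) hY (3 / δ)
    have hms : MeasurableSet {ω | 3 / δ ≤ Y ω} := measurableSet_le measurable_const hYm
    have hsmall : μ.real {ω | 3 / δ ≤ Y ω} ≤ δ := by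
      have h1 : 3 / δ * μ.real {ω | 3 / δ ≤ Y ω} ≤ 1 := hmk.trans hY1
      have h2 : 0 ≤ μ.real {ω | 3 / δ ≤ Y ω} := measureReal_nonneg
      rw [div_mul_eq_mul_div, div_le_one hδ0] at h1
      linarith
    calc ENNReal.ofReal (1 - δ) ≤ ENNReal.ofReal (μ.real {ω | 3 / δ ≤ Y ω}ᶜ) := by
          rw [probReal_compl_eq_one_sub hms]
          exact ENNReal.ofReal_le_ofReal (by linarith)
      _ = μ {ω | 3 / δ ≤ Y ω}ᶜ := ofReal_measureReal
      _ ≤ _ := by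
          refine measure_mono fun ω hω => ?_
          have h1 : Y ω < 3 / δ := not_le.1 hω
          exact (hX ω).trans (by
            have := mul_le_mul_of_nonneg_left (Real.log_le_log (hY0 ω) h1.le) hB
            linarith)

/-- Jensen's inequality for `log` at three points, with unnormalised weights. -/
theorem weighted_log_le {a b c x y z : ℝ} (ha : 0 < a) (hb : 0 < b) (hc : 0 < c) (hx : 0 < x)
    (hy : 0 < y) (hz : 0 < z) :
    a * Real.log x + b * Real.log y + c * Real.log z ≤
      (a + b + c) * Real.log ((a * x + b * y + c * z) / (a + b + c)) := by
  set Y := (a * x + b * y + c * z) / (a + b + c) with hY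
  have hY0 : 0 < Y := by positivity
  have key : ∀ {u : ℝ}, 0 < u → Real.log u ≤ Real.log Y + (u / Y - 1) := fun {u} hu => by
    have := Real.log_le_sub_one_of_pos (div_pos hu hY0)
    rw [Real.log_div hu.ne' hY0.ne'] at this
    linarith
  have h1 := mul_le_mul_of_nonneg_left (key hx) ha.le
  have h2 := mul_le_mul_of_nonneg_left (key hy) hb.le
  have h3 := mul_le_mul_of_nonneg_left (key hz) hc.le
  have h4 : a * (x / Y) + b * (y / Y) + c * (z / Y) = a + b + c := by
    have : a * (x / Y) + b * (y / Y) + c * (z / Y) = (a * x + b * y + c * z) / Y := by ring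
    rw [this, hY]
    have : a * x + b * y + c * z ≠ 0 := by positivity
    field_simp
  nlinarith

/-! ### Assembly -/

/-- Regret of the `q`-player running Exp3-IX with stochastic rewards
(Algorithm 2): with `η_q = √(ln m/(mT))` and `γ = η_q/2`,
`E[max_{q∈Δ_m} Σₜ φ(wₜ,q) − Σₜ φ(wₜ,qₜ)] ≤ 3√(mT ln m) + √(T/2) + 3(√(mT/ln m) + √(T/2) + 1)`
and, for every `δ ∈ (0,1)`, with probability at least `1 − δ`,
`max_{q∈Δ_m} Σₜ φ(wₜ,q) − Σₜ φ(wₜ,qₜ) ≤ 3√(mT ln m) + √(T/2) + (√(mT/ln m) + √(T/2) + 1) ln(3/δ)`. -/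
theorem stmt2
    {W : Type*} [MeasurableSpace W]
    {Z : Type*} [MeasurableSpace Z]
    (m T : ℕ) (hm : 2 ≤ m) (hT : 1 ≤ T)
    -- distributions, loss, risks
    (P : Fin m → Measure Z) (hP : ∀ i, IsProbabilityMeasure (P i))
    (ℓ : W → Z → ℝ)
    (hℓ_meas : Measurable (Function.uncurry ℓ))
    (hℓ01 : ∀ w z, ℓ w z ∈ Set.Icc (0 : ℝ) 1)
    (R : Fin m → W → ℝ) (hR : ∀ i w, R i w = ∫ z, ℓ w z ∂(P i))
    (φ : W → (Fin m → ℝ) → ℝ) (hφ : ∀ w q, φ w q = ∑ i, q i * R i w)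
    -- entropy Bregman distance on the simplex
    (Bq : (Fin m → ℝ) → (Fin m → ℝ) → ℝ)
    (hBq : ∀ a b, Bq a b = ∑ i, (a i * Real.log (a i) - b i * Real.log (b i) -
      (Real.log (b i) + 1) * (a i - b i)))
    -- the filtered probability space of the bandit interaction
    {Ω : Type*} [m0 : MeasurableSpace Ω] (μ : Measure Ω) [IsProbabilityMeasure μ]
    (F : ℕ → MeasurableSpace Ω) (hFmono : Monotone F) (hFle : ∀ t, F t ≤ m0)
    -- the `w`-player's iterates are `F_{t−1}`-measurable
    (w : ℕ → Ω → W)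
    (hw_adapted : ∀ t ∈ Finset.Icc 1 T, Measurable[F (t - 1)] (w t))
    -- the `q`-player's iterates are `F_{t−1}`-measurable and lie in the simplex
    (q : ℕ → Ω → Fin m → ℝ)
    (hq_adapted : ∀ t ∈ Finset.Icc 1 T, Measurable[F (t - 1)] (q t))
    (hq_simplex : ∀ t ∈ Finset.Icc 1 T, ∀ ω, q t ω ∈ stdSimplex ℝ (Fin m))
    (hq1 : ∀ ω, q 1 ω = fun _ => (m : ℝ)⁻¹)
    -- the index `i_t` drawn with conditional law `q_t` given `F_{t−1}`
    (it : ℕ → Ω → Fin m)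
    (hit_adapted : ∀ t ∈ Finset.Icc 1 T, Measurable[F t] (it t))
    (hit_law : ∀ t ∈ Finset.Icc 1 T, ∀ i,
      μ[(fun ω => if it t ω = i then (1 : ℝ) else 0) | F (t - 1)] =ᵐ[μ] fun ω => q t ω i)
    -- the sample `z_t` drawn from `P_{i_t}` given the past and the index
    (zt : ℕ → Ω → Z)
    (hzt_adapted : ∀ t ∈ Finset.Icc 1 T, Measurable[F t] (zt t))
    (hzt_law : ∀ t ∈ Finset.Icc 1 T, ∀ f : Z → ℝ, Measurable f → (∀ z, |f z| ≤ 1) →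
      μ[(fun ω => f (zt t ω)) | F (t - 1) ⊔ MeasurableSpace.comap (it t) ⊤] =ᵐ[μ]
        fun ω => ∫ z, f z ∂(P (it t ω)))
    -- step size, IX coefficient, IX loss estimator and the Exp3-IX update
    (ηq γ : ℝ)
    (hηq : ηq = Real.sqrt (Real.log m / (m * T)))
    (hγ : γ = ηq / 2)
    (stilde : ℕ → Ω → Fin m → ℝ)
    (hstilde : ∀ t ω i, stilde t ω i =
      (1 - ℓ (w t ω) (zt t ω)) / (q t ω i + γ) * (if it t ω = i then 1 else 0))
    (hq_upd : ∀ t ∈ Finset.Icc 1 T, ∀ ω, q (t + 1) ω ∈ stdSimplex ℝ (Fin m) ∧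
      IsMinOn (fun a => ηq * (∑ i, stilde t ω i * (a i - q t ω i)) + Bq a (q t ω))
        (stdSimplex ℝ (Fin m)) (q (t + 1) ω))
    (hreg_meas : AEStronglyMeasurable (fun ω =>
      (⨆ p : stdSimplex ℝ (Fin m), ∑ t ∈ Finset.Icc 1 T, φ (w t ω) (p : Fin m → ℝ)) -
        ∑ t ∈ Finset.Icc 1 T, φ (w t ω) (q t ω)) μ) :
    (∫ ω, ((⨆ p : stdSimplex ℝ (Fin m), ∑ t ∈ Finset.Icc 1 T, φ (w t ω) (p : Fin m → ℝ)) -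
        ∑ t ∈ Finset.Icc 1 T, φ (w t ω) (q t ω)) ∂μ ≤
      3 * Real.sqrt (m * T * Real.log m) + Real.sqrt (T / 2) +
        3 * (Real.sqrt (m * T / Real.log m) + Real.sqrt (T / 2) + 1)) ∧
    (∀ δ : ℝ, δ ∈ Set.Ioo (0 : ℝ) 1 →
      ENNReal.ofReal (1 - δ) ≤
        μ {ω | (⨆ p : stdSimplex ℝ (Fin m),
              ∑ t ∈ Finset.Icc 1 T, φ (w t ω) (p : Fin m → ℝ)) -
            ∑ t ∈ Finset.Icc 1 T, φ (w t ω) (q t ω) ≤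
          3 * Real.sqrt (m * T * Real.log m) + Real.sqrt (T / 2) +
            (Real.sqrt (m * T / Real.log m) + Real.sqrt (T / 2) + 1) * Real.log (3 / δ)}) := by
  classical
  have hm0 : 0 < m := by omega
  have hmR : (0 : ℝ) < m := by exact_mod_cast hm0
  have hTR : (0 : ℝ) < T := by exact_mod_cast hT
  have hlogm : 0 < Real.log m := Real.log_pos (by exact_mod_cast hm)
  have hη0 : 0 < ηq := by rw [hηq]; positivity
  have hγ0 : 0 < γ := by linarith
  have h2γ : 2 * γ = ηq := by linarith
  have : Nonempty (Fin m) := ⟨⟨0, hm0⟩⟩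
  -- observed gains `g` and mean gains `r`
  set c : W → Z → ℝ := fun v z => 1 - ℓ v z with hc
  have hcm : Measurable (Function.uncurry c) := measurable_const.sub hℓ_meas
  have hc01 : ∀ v z, c v z ∈ Set.Icc (0 : ℝ) 1 := fun v z =>
    ⟨by linarith [(hℓ01 v z).2], by linarith [(hℓ01 v z).1]⟩
  set g : ℕ → Ω → ℝ := fun t ω => c (w t ω) (zt t ω) with hg
  have hg0 : ∀ t ω, 0 ≤ g t ω := fun t ω => (hc01 _ _).1
  have hg1 : ∀ t ω, g t ω ≤ 1 := fun t ω => (hc01 _ _).2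
  set r : ℕ → Ω → Fin m → ℝ := fun t ω i => ∫ x, c (w t ω) x ∂(P i) with hr
  have hrR : ∀ t ω i, r t ω i = 1 - R i (w t ω) := fun t ω i => by
    have hli : Integrable (fun x => ℓ (w t ω) x) (P i) :=
      integrable_of_abs_le (hℓ_meas.comp measurable_prodMk_left) 1 fun x => by
        rw [abs_of_nonneg (hℓ01 _ _).1]; exact (hℓ01 _ _).2
    simp only [hr, hc, hR]
    rw [integral_sub (integrable_const 1) hli]
    simp
  have hR0 : ∀ i v, 0 ≤ R i v := fun i v => by
    rw [hR]; exact integral_nonneg fun x => (hℓ01 v x).1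
  have hr1 : ∀ t ω i, r t ω i ≤ 1 := fun t ω i => by rw [hrR]; linarith [hR0 i (w t ω)]
  have hr0 : ∀ t ω i, 0 ≤ r t ω i := fun t ω i => integral_nonneg fun x => (hc01 _ x).1
  have hq01 : ∀ t ∈ Finset.Icc 1 T, ∀ ω i, 0 ≤ q t ω i := fun t ht ω => (hq_simplex t ht ω).1
  have hqr : ∀ t ∈ Finset.Icc 1 T, ∀ ω i, q t ω i * r t ω i ≤ q t ω i := fun t ht ω i =>
    mul_le_of_le_one_right (hq01 t ht ω i) (hr1 t ω i)
  have hmean : ∀ t ∈ Finset.Icc 1 T, ∀ ω, ∑ i, q t ω i * r t ω i ≤ 1 := fun t ht ω => by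
    rw [← (hq_simplex t ht ω).2]
    exact Finset.sum_le_sum fun i _ => hqr t ht ω i
  have hmean0 : ∀ t ∈ Finset.Icc 1 T, ∀ ω, 0 ≤ ∑ i, q t ω i * r t ω i := fun t ht ω =>
    Finset.sum_nonneg fun i _ => mul_nonneg (hq01 t ht ω i) (hr0 t ω i)
  have hqr1 : ∀ t ∈ Finset.Icc 1 T, ∀ ω i, q t ω i * r t ω i ≤ 1 := fun t ht ω i =>
    (Finset.single_le_sum (fun j _ => mul_nonneg (hq01 t ht ω j) (hr0 t ω j))
      (Finset.mem_univ i)).trans (hmean t ht ω)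
  have hpast : ∀ t, F (t - 1) ≤ F t := fun t => hFmono (Nat.sub_le t 1)
  have hrm : ∀ t ∈ Finset.Icc 1 T, Measurable[F (t - 1)] (r t) := fun t ht =>
    @measurable_pi_lambda _ _ _ (F (t - 1)) _ _ fun i =>
      (hcm.stronglyMeasurable.integral_prod_right).measurable.comp (hw_adapted t ht)
  have hgm : ∀ t ∈ Finset.Icc 1 T, Measurable[F t] (g t) := fun t ht =>
    Measurable.comp (f := fun ω => (w t ω, zt t ω)) hcm (Measurable.prodMk
      ((hw_adapted t ht).mono (hpast t) le_rfl) (hzt_adapted t ht))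
  have hsamp : ∀ t ∈ Finset.Icc 1 T, ∀ i, ∀ h : Ω → ℝ, Measurable[F (t - 1)] h →
      (∀ ω, 0 ≤ h ω) → ∀ C : ℝ, (∀ ω, h ω ≤ C) →
      ∫ ω, h ω * ((if it t ω = i then 1 else 0) * g t ω) ∂μ =
        ∫ ω, h ω * (q t ω i * r t ω i) ∂μ := fun t ht i h hh h0 C hC =>
    sampling_identity (𝓖 := F (t - 1)) (𝓗 := F (t - 1) ⊔ MeasurableSpace.comap (it t) ⊤)
      P hP c hcm hc01 le_sup_left
      (sup_le (hFle _) ((hit_adapted t ht).mono (hFle t) le_rfl).comap_le)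
      (hw_adapted t ht) ((comap_measurable (it t)).mono le_sup_right le_rfl) (hit_law t ht)
      ((hzt_adapted t ht).mono (hFle t) le_rfl) (hzt_law t ht) i hh h0 hC
  have hst : ∀ t ω i, stilde t ω i =
      g t ω / (q t ω i + γ) * (if it t ω = i then 1 else 0) := hstilde
  have hstm : ∀ t ∈ Finset.Icc 1 T, ∀ i, Measurable[F t] fun ω => stilde t ω i := fun t ht i => by
    have h1 : Measurable[F t] fun ω => q t ω i :=
      (measurable_pi_apply i).comp ((hq_adapted t ht).mono (hpast t) le_rfl)
    simp only [hst]
    exact ((hgm t ht).div (h1.add_const γ)).mul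
      (Measurable.ite (hit_adapted t ht (measurableSet_singleton i))
        (@measurable_const _ _ _ (F t) _) (@measurable_const _ _ _ (F t) _))
  have hstle : ∀ t ∈ Finset.Icc 1 T, ∀ ω i, stilde t ω i ≤ 1 / γ := fun t ht ω i => by
    have h1 : g t ω / (q t ω i + γ) ≤ 1 / γ :=
      div_le_div₀ zero_le_one (hg1 t ω) hγ0 (by linarith [hq01 t ht ω i])
    rw [hst]
    split_ifs
    · simpa using h1
    · simpa using hγ0.le
  -- exponential supermartingale for the estimator errors, weighted by `α`
  have hIX : ∀ α : Fin m → ℝ, (∀ i, 0 ≤ α i) → (∀ i, α i ≤ 1) →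
      Integrable (fun ω => Real.exp (∑ t ∈ Finset.Icc 1 T,
        ηq * ∑ i, α i * (stilde t ω i - r t ω i))) μ ∧
      Measurable (fun ω => Real.exp (∑ t ∈ Finset.Icc 1 T,
        ηq * ∑ i, α i * (stilde t ω i - r t ω i))) ∧
      ∫ ω, Real.exp (∑ t ∈ Finset.Icc 1 T,
        ηq * ∑ i, α i * (stilde t ω i - r t ω i)) ∂μ ≤ 1 := by
    intro α hα0 hα1
    obtain ⟨h1, h2, h3⟩ := integral_exp_sum_le_one (μ := μ) F hFmono T
      (fun t ω => ηq * ∑ i, α i * (stilde t ω i - r t ω i))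
      (fun t ht => Measurable.const_mul (Finset.measurable_sum _ fun i _ =>
        ((hstm t ht i).sub ((measurable_pi_apply i).comp
          ((hrm t ht).mono (hpast t) le_rfl))).const_mul _) _)
      (ηq * ∑ _i : Fin m, 1 / γ)
      (fun t ht ω => by
        refine mul_le_mul_of_nonneg_left (Finset.sum_le_sum fun i _ => ?_) hη0.le
        have h1 : stilde t ω i - r t ω i ≤ 1 / γ := by linarith [hstle t ht ω i, hr0 t ω i]
        exact (mul_le_mul_of_nonneg_left h1 (hα0 i)).trans
          (mul_le_of_le_one_left (by positivity) (hα1 i)))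
      (fun t ht h hh h0 D hD => by
        have := ix_step (hFle (t - 1)) (hq_adapted t ht) (hq01 t ht) (hrm t ht) (hr0 t)
          ((hit_adapted t ht).mono (hFle t) le_rfl) ((hgm t ht).mono (hFle t) le_rfl) (hg0 t)
          (hg1 t) (hsamp t ht) (hqr1 t ht) hγ0 hα0 hα1 hh h0 hD
        simpa only [h2γ, ← hst] using this) T le_rfl
    have h1' := h1.mono (hFle T) le_rfl
    exact ⟨integrable_of_abs_le h1' _ fun ω => by rw [abs_of_pos (Real.exp_pos _)]; exact h2 ω,
      h1', h3⟩
  -- exponential supermartingale for the observed gains; this `lam` balances `1 / lam` and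
  -- `lam * T / 2`
  set B₃ := Real.sqrt (T / 2) with hB₃
  have hB₃0 : 0 < B₃ := by positivity
  have hB₃sq : B₃ ^ 2 = T / 2 := Real.sq_sqrt (by positivity)
  set lam := 1 / B₃ with hlam
  have hlam0 : 0 < lam := by positivity
  have hAz : Integrable (fun ω => Real.exp (∑ t ∈ Finset.Icc 1 T,
        (lam * ((∑ i, q t ω i * r t ω i) - g t ω) - lam ^ 2 / 2))) μ ∧
      Measurable (fun ω => Real.exp (∑ t ∈ Finset.Icc 1 T,
        (lam * ((∑ i, q t ω i * r t ω i) - g t ω) - lam ^ 2 / 2))) ∧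
      ∫ ω, Real.exp (∑ t ∈ Finset.Icc 1 T,
        (lam * ((∑ i, q t ω i * r t ω i) - g t ω) - lam ^ 2 / 2)) ∂μ ≤ 1 := by
    obtain ⟨h1, h2, h3⟩ := integral_exp_sum_le_one (μ := μ) F hFmono T
      (fun t ω => lam * ((∑ i, q t ω i * r t ω i) - g t ω) - lam ^ 2 / 2)
      (fun t ht => (Measurable.const_mul ((Finset.measurable_sum _ fun i _ =>
        ((measurable_pi_apply i).comp ((hq_adapted t ht).mono (hpast t) le_rfl)).mul
        ((measurable_pi_apply i).comp ((hrm t ht).mono (hpast t) le_rfl))).sub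
          (hgm t ht)) _).sub_const _)
      lam
      (fun t ht ω => by nlinarith [hmean t ht ω, hg0 t ω])
      (fun t ht h hh h0 D hD =>
        azuma_step (hFle (t - 1)) (hq_adapted t ht) (hq01 t ht) (hrm t ht) (hr0 t) (hmean t ht)
          ((hit_adapted t ht).mono (hFle t) le_rfl) ((hgm t ht).mono (hFle t) le_rfl) (hg0 t)
          (hg1 t) (hsamp t ht) lam hh h0 hD) T le_rfl
    have h1' := h1.mono (hFle T) le_rfl
    exact ⟨integrable_of_abs_le h1' _ fun ω => by rw [abs_of_pos (Real.exp_pos _)]; exact h2 ω,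
      h1', h3⟩
  set E : (Fin m → ℝ) → Ω → ℝ := fun α ω => Real.exp (∑ t ∈ Finset.Icc 1 T,
    ηq * ∑ i, α i * (stilde t ω i - r t ω i)) with hE
  set X₁ : Ω → ℝ := fun ω => (m : ℝ)⁻¹ * ∑ j, E (Pi.single j 1) ω with hX₁
  set X₂ : Ω → ℝ := E 1 with hX₂
  set X₃ : Ω → ℝ := fun ω => Real.exp (∑ t ∈ Finset.Icc 1 T,
    (lam * ((∑ i, q t ω i * r t ω i) - g t ω) - lam ^ 2 / 2)) with hX₃
  have hsingle : ∀ j : Fin m, (∀ i, 0 ≤ (Pi.single j 1 : Fin m → ℝ) i) ∧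
      ∀ i, (Pi.single j 1 : Fin m → ℝ) i ≤ 1 := fun j => by
    refine ⟨fun i => ?_, fun i => ?_⟩ <;> by_cases h : i = j <;> simp [h]
  have hE1 := fun j => hIX (Pi.single j 1) (hsingle j).1 (hsingle j).2
  have hE2 := hIX 1 (fun _ => zero_le_one) (fun _ => le_rfl)
  have hX₁i : Integrable X₁ μ := (integrable_finsetSum _ fun j _ => (hE1 j).1).const_mul _
  have hX₁m : Measurable X₁ := (Finset.measurable_sum _ fun j _ => (hE1 j).2.1).const_mul _
  have hX₁1 : ∫ ω, X₁ ω ∂μ ≤ 1 := by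
    simp only [hX₁]
    rw [integral_const_mul, integral_finsetSum _ fun j _ => (hE1 j).1, inv_mul_le_iff₀ hmR]
    calc _ ≤ ∑ _j : Fin m, (1 : ℝ) := Finset.sum_le_sum fun j _ => (hE1 j).2.2
      _ = m * 1 := by simp
  have hEpos : ∀ α ω, 0 < E α ω := fun α ω => Real.exp_pos _
  have hX₁0 : ∀ ω, 0 < X₁ ω := fun ω =>
    mul_pos (inv_pos.2 hmR) (Finset.sum_pos (fun j _ => hEpos _ ω) Finset.univ_nonempty)
  have hX₃0 : ∀ ω, 0 < X₃ ω := fun ω => Real.exp_pos _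
  set A₁ := Real.sqrt (m * T * Real.log m) with hA₁
  set B₁ := Real.sqrt (m * T / Real.log m) with hB₁
  have hA₁0 : 0 < A₁ := by positivity
  have hB₁0 : 0 < B₁ := by positivity
  have hηB : ηq * B₁ = 1 := by
    rw [hηq, hB₁, ← Real.sqrt_mul (by positivity), Real.sqrt_eq_one]
    field_simp
  have hηA : ηq * A₁ = Real.log m := by
    rw [hηq, hA₁, ← Real.sqrt_mul (by positivity),
      Real.sqrt_eq_iff_mul_self_eq (by positivity) hlogm.le]
    field_simp
  have hηsq : ηq ^ 2 * (m * T) = Real.log m := by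
    rw [hηq, Real.sq_sqrt (by positivity)]
    field_simp
  have hlamB : lam * B₃ = 1 := by rw [hlam]; field_simp
  set reg : Ω → ℝ := fun ω =>
    (⨆ p : stdSimplex ℝ (Fin m), ∑ t ∈ Finset.Icc 1 T, φ (w t ω) (p : Fin m → ℝ)) -
      ∑ t ∈ Finset.Icc 1 T, φ (w t ω) (q t ω) with hreg
  have harm : ∀ ω j, ∑ t ∈ Finset.Icc 1 T, ((∑ i, q t ω i * r t ω i) - r t ω j) ≤
      3 * A₁ + B₃ + (B₁ * Real.log (X₁ ω) + 1 * Real.log (X₂ ω) + B₃ * Real.log (X₃ ω)) := by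
    intro ω j
    have hdec := regret_decomposition hm0 T hT ηq γ hη0 hγ (fun t => q t ω)
      (fun t => stilde t ω) (fun t => r t ω) (fun t => g t ω) (fun t => it t ω)
      (fun t => hg0 t ω) (fun t => hg1 t ω) (fun t => hr1 t ω) (fun t _ => hst t ω) (hq1 ω)
      (fun t ht => hq_simplex t ht ω)
      (fun t ht => by simpa only [hBq] using hq_upd t ht ω) j
    have hL1 : ηq * ∑ t ∈ Finset.Icc 1 T, (stilde t ω j - r t ω j) ≤
        Real.log (X₁ ω) + Real.log m := by
      have h1 : E (Pi.single j 1) ω ≤ m * X₁ ω := by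
        simp only [hX₁]
        rw [← mul_assoc, mul_inv_cancel₀ hmR.ne', one_mul]
        exact Finset.single_le_sum (fun i _ => (hEpos (Pi.single i 1) ω).le) (Finset.mem_univ j)
      have h2 := Real.log_le_log (hEpos _ ω) h1
      rw [Real.log_mul hmR.ne' (hX₁0 ω).ne'] at h2
      have h3 : Real.log (E (Pi.single j 1) ω) =
          ηq * ∑ t ∈ Finset.Icc 1 T, (stilde t ω j - r t ω j) := by
        simp only [hE, Real.log_exp, Finset.mul_sum, Pi.single_apply, ite_mul, one_mul, zero_mul,
          mul_ite, mul_zero, Finset.sum_ite_eq', Finset.mem_univ, if_true]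
      linarith
    have hL2 : ηq * ∑ t ∈ Finset.Icc 1 T, ∑ i, (stilde t ω i - r t ω i) =
        Real.log (X₂ ω) := by
      simp only [hX₂, hE, Real.log_exp, Pi.one_apply, one_mul, Finset.mul_sum]
    have hL3 : ∑ t ∈ Finset.Icc 1 T, ((∑ i, q t ω i * r t ω i) - g t ω) =
        B₃ * Real.log (X₃ ω) + B₃ := by
      have h1 : Real.log (X₃ ω) =
          lam * ∑ t ∈ Finset.Icc 1 T, ((∑ i, q t ω i * r t ω i) - g t ω) - 1 := by
        simp only [hX₃, Real.log_exp]
        rw [Finset.sum_sub_distrib, ← Finset.mul_sum, Finset.sum_const, Nat.card_Icc,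
          nsmul_eq_mul, Nat.add_sub_cancel]
        have : (T : ℝ) * (lam ^ 2 / 2) = 1 := by
          have h2 : (T : ℝ) = 2 * B₃ ^ 2 := by rw [hB₃sq]; ring
          rw [h2]
          calc 2 * B₃ ^ 2 * (lam ^ 2 / 2) = (lam * B₃) ^ 2 := by ring
            _ = 1 := by rw [hlamB, one_pow]
        rw [this]
      rw [h1]
      linear_combination (-∑ t ∈ Finset.Icc 1 T, ((∑ i, q t ω i * r t ω i) - g t ω)) * hlamB
    rw [hL2, hL3, hηsq] at hdec
    refine le_of_mul_le_mul_left (hdec.trans ?_) hη0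
    have e1 : ηq * (3 * A₁ + B₃ + (B₁ * Real.log (X₁ ω) + 1 * Real.log (X₂ ω) +
        B₃ * Real.log (X₃ ω))) = 3 * Real.log m + Real.log (X₁ ω) + ηq * Real.log (X₂ ω) +
        ηq * (B₃ * Real.log (X₃ ω) + B₃) := by
      linear_combination 3 * hηA + Real.log (X₁ ω) * hηB
    rw [e1]
    linarith
  have hregle : ∀ ω, reg ω ≤ 3 * A₁ + B₃ +
      (B₁ * Real.log (X₁ ω) + 1 * Real.log (X₂ ω) + B₃ * Real.log (X₃ ω)) := by
    intro ω
    have : Nonempty (stdSimplex ℝ (Fin m)) :=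
      ⟨⟨q 1 ω, hq_simplex 1 (Finset.mem_Icc.2 ⟨le_rfl, hT⟩) ω⟩⟩
    simp only [hreg]
    rw [sub_le_iff_le_add]
    refine ciSup_le fun p => ?_
    set K := 3 * A₁ + B₃ +
      (B₁ * Real.log (X₁ ω) + 1 * Real.log (X₂ ω) + B₃ * Real.log (X₃ ω)) with hK
    have h1 : ∀ j, ∑ t ∈ Finset.Icc 1 T, R j (w t ω) ≤
        K + ∑ t ∈ Finset.Icc 1 T, φ (w t ω) (q t ω) := fun j => by
      have h2 : ∑ t ∈ Finset.Icc 1 T, R j (w t ω) - ∑ t ∈ Finset.Icc 1 T, φ (w t ω) (q t ω) =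
          ∑ t ∈ Finset.Icc 1 T, ((∑ i, q t ω i * r t ω i) - r t ω j) := by
        rw [← Finset.sum_sub_distrib]
        refine Finset.sum_congr rfl fun t ht => ?_
        simp only [hφ, hrR, mul_sub, mul_one, Finset.sum_sub_distrib, (hq_simplex t ht ω).2]
        ring
      linarith [harm ω j]
    calc ∑ t ∈ Finset.Icc 1 T, φ (w t ω) (p : Fin m → ℝ)
        = ∑ j, (p : Fin m → ℝ) j * ∑ t ∈ Finset.Icc 1 T, R j (w t ω) := by
          simp only [hφ, Finset.mul_sum]
          exact Finset.sum_comm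
      _ ≤ ∑ j, (p : Fin m → ℝ) j * (K + ∑ t ∈ Finset.Icc 1 T, φ (w t ω) (q t ω)) :=
          Finset.sum_le_sum fun j _ => mul_le_mul_of_nonneg_left (h1 j) (p.2.1 j)
      _ = _ := by
          have hp1 : ∑ j, (p : Fin m → ℝ) j = 1 := p.2.2
          rw [← Finset.sum_mul, hp1, one_mul]
  have hBpos : 0 < B₁ + 1 + B₃ := by positivity
  have hsumi : Integrable (fun ω => B₁ * X₁ ω + 1 * X₂ ω + B₃ * X₃ ω) μ :=
    ((hX₁i.const_mul _).add (hE2.1.const_mul _)).add (hAz.1.const_mul _)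
  have hY1 : ∫ ω, (B₁ * X₁ ω + 1 * X₂ ω + B₃ * X₃ ω) / (B₁ + 1 + B₃) ∂μ ≤ 1 := by
    have h12 : Integrable (fun ω => B₁ * X₁ ω + 1 * X₂ ω) μ :=
      (hX₁i.const_mul _).add (hE2.1.const_mul _)
    have hX₂i : Integrable X₂ μ := hE2.1
    rw [integral_div, integral_add h12 (hAz.1.const_mul _),
      integral_add (hX₁i.const_mul _) (hX₂i.const_mul _), integral_const_mul B₁ X₁,
      integral_const_mul 1 X₂, integral_const_mul B₃ X₃, div_le_one hBpos]
    have h1 := mul_le_mul_of_nonneg_left hX₁1 hB₁0.le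
    have h2 : ∫ ω, X₂ ω ∂μ ≤ 1 := hE2.2.2
    have h3' : ∫ ω, X₃ ω ∂μ ≤ 1 := hAz.2.2
    have h3 := mul_le_mul_of_nonneg_left h3' hB₃0.le
    linarith
  have hfin := bounds_of_le_log (μ := μ) (X := reg)
    (Y := fun ω => (B₁ * X₁ ω + 1 * X₂ ω + B₃ * X₃ ω) / (B₁ + 1 + B₃))
    (A := 3 * A₁ + B₃) (B := B₁ + 1 + B₃) (by positivity) hBpos.le
    ((((hX₁m.const_mul _).add (hE2.2.1.const_mul _)).add (hAz.2.1.const_mul _)).div_const _)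
    (hsumi.div_const _)
    (fun ω => div_pos (add_pos (add_pos (mul_pos hB₁0 (hX₁0 ω)) (mul_pos one_pos (hEpos 1 ω)))
      (mul_pos hB₃0 (hX₃0 ω))) hBpos) hY1
    (fun ω => (hregle ω).trans (add_le_add_right
      (weighted_log_le hB₁0 one_pos hB₃0 (hX₁0 ω) (hEpos 1 ω) (hX₃0 ω)) _))
  have hBc : B₁ + 1 + B₃ = B₁ + B₃ + 1 := by ring
  rwa [hBc] at hfin
end

section
/- Let (F_t)_{t=0}^T be a filtration on a probability space. For each t ∈ [T] and i ∈ [m], let p_t ∈ Δ_m and ξ_{t,i} ∈ [0,1] be F_{t−1}-measurable, let i_t ∈ [m] have conditional law p_t given F_{t−1}, and let ξ̂_{t,i} ∈ [0,1] be a random variable with E[ξ̂_{t,i} | F_{t−1}] = ξ_{t,i} that is conditionally independent of i_t given F_{t−1}; all variables at step t are F_t-measurable. Fix γ > 0 and define ξ̃_{t,i} = (ξ̂_{t,i}/(p_{t,i} + γ))·1[i_t = i]. Then for any δ ∈ (0,1), with probability at least 1 − δ, simultaneously for all i ∈ [m], Σ_{t=1}^T (ξ̃_{t,i} − ξ_{t,i})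 ≤ (1/(2γ))·ln(m/δ). -/
/-!
The proof is the exponential supermartingale argument for implicit exploration. For a fixed arm `i`
put `M n = exp (2γ ∑_{t ≤ n} (ξ̃ t - ξ t))`. Then `∫ M n ≤ 1` for every `n ≤ T`, so Markov's
inequality bounds the failure probability of arm `i` by `δ / m`, and a union bound over the arms
concludes.

The step `∫ M (n+1) ≤ ∫ M n` (`integral_mul_exp_step_le`) combines three facts. By convexity,
`exp (2γ ξ̃) ≤ 1 + ξ̂ 1[J = i] (exp (2γ / (q + γ)) - 1)`, where `q` is the probability of arm `i`
(`exp_le_chord`). Conditional independence replaces `ξ̂ 1[J = i]` by its conditional mean `ξ q`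
(`integral_mul_indicator_of_condIndepFun`). Finally `q (exp (2γ / (q + γ)) - 1) ≤ 2γ`
(`mul_exp_sub_one_le`), so the conditional mean is at most `1 + 2γ ξ ≤ exp (2γ ξ)`. Using the chord
rather than `ξ̂ / q` keeps all weights bounded, and no case distinction at `q = 0` is needed in the
integrals.

Conditional independence is given on events only; it is transferred to the real-valued `ξ̂` by
comparing two image measures on `ℝ` (`integral_mul_eq_of_forall_preimage`).
-/

open MeasureTheory ProbabilityTheory
open scoped BigOperators

lemma integrable_of_nonneg_of_le {Ω : Type*} [MeasurableSpace Ω] {μ : Measure Ω}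
    [IsFiniteMeasure μ] {w : Ω → ℝ} {C : ℝ} (hw : Measurable w) (h0 : ∀ ω, 0 ≤ w ω)
    (hC : ∀ ω, w ω ≤ C) : Integrable w μ := by
  refine Integrable.of_bound hw.aestronglyMeasurable C (ae_of_all _ fun ω => ?_)
  rw [Real.norm_of_nonneg (h0 ω)]
  exact hC ω

/-- Two bounded weights `u`, `v` that give every event of `σ(X)` the same mass give `X` the same
weighted integral: the image measures of `u • μ` and `v • μ` under `X` coincide. -/
lemma integral_mul_eq_of_forall_preimage {Ω : Type*} [MeasurableSpace Ω]
    {μ : Measure Ω} [IsFiniteMeasure μ] {u v X : Ω → ℝ} {C : ℝ}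
    (hu : Measurable u) (hv : Measurable v) (hX : Measurable X)
    (hu0 : ∀ ω, 0 ≤ u ω) (hv0 : ∀ ω, 0 ≤ v ω) (huC : ∀ ω, u ω ≤ C) (hvC : ∀ ω, v ω ≤ C)
    (h : ∀ A : Set ℝ, MeasurableSet A → ∫ ω in X ⁻¹' A, u ω ∂μ = ∫ ω in X ⁻¹' A, v ω ∂μ) :
    ∫ ω, u ω * X ω ∂μ = ∫ ω, v ω * X ω ∂μ := by
  have hmass : ∀ w : Ω → ℝ, Measurable w → (∀ ω, 0 ≤ w ω) → (∀ ω, w ω ≤ C) →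
      ∀ A : Set ℝ, MeasurableSet A →
      (μ.withDensity fun ω => ENNReal.ofReal (w ω)).map X A
        = ENNReal.ofReal (∫ ω in X ⁻¹' A, w ω ∂μ) := by
    intro w hw h0 hC A hA
    rw [Measure.map_apply hX hA, withDensity_apply _ (hX hA),
      ofReal_integral_eq_lintegral_ofReal (integrable_of_nonneg_of_le hw h0 hC).integrableOn (ae_of_all _ h0)]
  have hval : ∀ w : Ω → ℝ, Measurable w → (∀ ω, 0 ≤ w ω) →
      ∫ x, x ∂((μ.withDensity fun ω => ENNReal.ofReal (w ω)).map X) = ∫ ω, w ω * X ω ∂μ := by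
    intro w hw h0
    rw [integral_map hX.aemeasurable measurable_id'.aestronglyMeasurable,
      integral_withDensity_eq_integral_toReal_smul hw.ennreal_ofReal
        (ae_of_all _ fun _ => ENNReal.ofReal_lt_top)]
    simp [ENNReal.toReal_ofReal (h0 _)]
  rw [← hval u hu hu0, ← hval v hv hv0]
  congr 1
  ext A hA
  rw [hmass u hu hu0 huC A hA, hmass v hv hv0 hvC A hA, h A hA]

lemma integral_mul_condExp_of_bound {Ω : Type*} {G m0 : MeasurableSpace Ω} (hG : G ≤ m0)
    {μ : Measure Ω} [IsFiniteMeasure μ] {W X : Ω → ℝ} {C : ℝ}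
    (hW : Measurable[G] W) (hW0 : ∀ ω, 0 ≤ W ω) (hWC : ∀ ω, W ω ≤ C) (hX : Integrable X μ) :
    ∫ ω, W ω * X ω ∂μ = ∫ ω, W ω * (μ[X | G]) ω ∂μ := by
  have h := condExp_stronglyMeasurable_mul_of_bound hG hW.stronglyMeasurable hX C
    (ae_of_all _ fun ω => by rw [Real.norm_of_nonneg (hW0 ω)]; exact hWC ω)
  have h2 := integral_condExp (μ := μ) hG (f := W * X)
  rw [integral_congr_ae h] at h2
  exact h2.symm

/-- Conditional independence at the level of integrals: against a bounded `G`-measurable weight,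
`X · 1[J = i]` integrates like the product of the conditional means `ξ` and `q`. -/
lemma integral_mul_indicator_of_condIndepFun {Ω : Type*} {G m0 : MeasurableSpace Ω}
    [StandardBorelSpace Ω] (hG : G ≤ m0) {μ : Measure Ω} [IsProbabilityMeasure μ]
    {m : ℕ} (i : Fin m) {J : Ω → Fin m} {X ξ q W : Ω → ℝ} {C : ℝ}
    (hJ : Measurable J) (hX : Measurable X) (hX01 : ∀ ω, X ω ∈ Set.Icc (0 : ℝ) 1)
    (hq : Measurable[G] q) (hq01 : ∀ ω, q ω ∈ Set.Icc (0 : ℝ) 1)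
    (hJq : μ[(fun ω => if J ω = i then (1 : ℝ) else 0) | G] =ᵐ[μ] q)
    (hXξ : μ[X | G] =ᵐ[μ] ξ) (hind : CondIndepFun G hG X J μ)
    (hW : Measurable[G] W) (hW0 : ∀ ω, 0 ≤ W ω) (hWC : ∀ ω, W ω ≤ C) :
    ∫ ω, W ω * (X ω * (if J ω = i then 1 else 0)) ∂μ = ∫ ω, W ω * (ξ ω * q ω) ∂μ := by
  have hqm : Measurable q := hq.mono hG le_rfl
  have hWm : Measurable W := hW.mono hG le_rfl
  have hB : MeasurableSet (J ⁻¹' {i}) := hJ (measurableSet_singleton i)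
  have hBm : Measurable (fun ω => if J ω = i then (1 : ℝ) else 0) :=
    Measurable.ite hB measurable_const measurable_const
  have hXint : Integrable X μ := integrable_of_nonneg_of_le hX (fun ω => (hX01 ω).1) fun ω => (hX01 ω).2
  have hWq : Measurable[G] fun ω => W ω * q ω := hW.mul hq
  have hWq0 : ∀ ω, 0 ≤ W ω * q ω := fun ω => mul_nonneg (hW0 ω) (hq01 ω).1
  have hWqC : ∀ ω, W ω * q ω ≤ C := fun ω =>
    (mul_le_of_le_one_right (hW0 ω) (hq01 ω).2).trans (hWC ω)
  have key : ∫ ω, (W ω * (if J ω = i then 1 else 0)) * X ω ∂μ = ∫ ω, (W ω * q ω) * X ω ∂μ := by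
    refine integral_mul_eq_of_forall_preimage (C := C) (hWm.mul hBm) (hWm.mul hqm) hX
      (fun ω => mul_nonneg (hW0 ω) (by split_ifs <;> norm_num)) hWq0
      (fun ω => (mul_le_of_le_one_right (hW0 ω) (by split_ifs <;> norm_num)).trans (hWC ω))
      hWqC ?_
    intro A hA
    have hXA : MeasurableSet (X ⁻¹' A) := hX hA
    have hBeq : (J ⁻¹' {i}).indicator (fun _ => (1 : ℝ)) = fun ω => if J ω = i then (1 : ℝ) else 0 := by
      ext ω; simp [Set.indicator]
    have hI : ∀ S : Set Ω, MeasurableSet S → Integrable (S.indicator fun _ => (1 : ℝ)) μ :=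
      fun S hS => (integrable_const 1).indicator hS
    have hc := (condIndepFun_iff_condExp_inter_preimage_eq_mul hX hJ).1 hind A {i} hA
      (measurableSet_singleton i)
    rw [← integral_indicator hXA, ← integral_indicator hXA]
    calc ∫ ω, (X ⁻¹' A).indicator (fun ω => W ω * (if J ω = i then 1 else 0)) ω ∂μ
        = ∫ ω, W ω * ((X ⁻¹' A ∩ J ⁻¹' {i}).indicator (fun _ => (1 : ℝ))) ω ∂μ := by
          congr 1; ext ω
          by_cases h1 : X ω ∈ A <;> by_cases h2 : J ω = i <;> simp [Set.indicator, h1, h2]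
      _ = ∫ ω, (W ω * q ω) * (μ[(X ⁻¹' A).indicator (fun _ => (1 : ℝ)) | G]) ω ∂μ := by
          rw [integral_mul_condExp_of_bound hG hW hW0 hWC (hI _ (hXA.inter hB))]
          refine integral_congr_ae ?_
          rw [← hBeq] at hJq
          filter_upwards [hc, hJq] with ω h1 h2
          rw [h1, h2]; ring
      _ = ∫ ω, (W ω * q ω) * (X ⁻¹' A).indicator (fun _ => (1 : ℝ)) ω ∂μ :=
          (integral_mul_condExp_of_bound hG hWq hWq0 hWqC (hI _ hXA)).symm
      _ = ∫ ω, (X ⁻¹' A).indicator (fun ω => W ω * q ω) ω ∂μ := by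
          congr 1; ext ω
          by_cases h1 : X ω ∈ A <;> simp [Set.indicator, h1]
  calc ∫ ω, W ω * (X ω * (if J ω = i then 1 else 0)) ∂μ
      = ∫ ω, (W ω * (if J ω = i then 1 else 0)) * X ω ∂μ := by congr 1; ext ω; ring
    _ = ∫ ω, (W ω * q ω) * X ω ∂μ := key
    _ = ∫ ω, (W ω * q ω) * (μ[X | G]) ω ∂μ := integral_mul_condExp_of_bound hG hWq hWq0 hWqC hXint
    _ = ∫ ω, W ω * (ξ ω * q ω) ∂μ := by
        refine integral_congr_ae ?_
        filter_upwards [hXξ] with ω h1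
        rw [h1]; ring

/-- Chord bound for the exponential on `[0, a]`, linear in `x`, so that conditional means of `x` can
be substituted on the right. -/
lemma exp_le_chord {a x : ℝ} (hx : x ∈ Set.Icc (0 : ℝ) 1) :
    Real.exp (x * a) ≤ 1 + x * (Real.exp a - 1) := by
  have h := convexOn_exp.2 (Set.mem_univ (0 : ℝ)) (Set.mem_univ a)
    (sub_nonneg.2 hx.2) hx.1 (by ring)
  simp only [smul_eq_mul, mul_zero, zero_add, Real.exp_zero] at h
  linarith

/-- The implicit-exploration shift `γ` exactly absorbs the exponential; this is the inequality
`2z / (z + 2) ≤ log (1 + z)` at `z = 2γ / q`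
when `q > 0`. -/
lemma mul_exp_sub_one_le {q γ : ℝ} (hq : 0 ≤ q) (hγ : 0 < γ) :
    q * (Real.exp (2 * γ / (q + γ)) - 1) ≤ 2 * γ := by
  rcases hq.eq_or_lt with rfl | hq
  · simp; linarith
  have hz : 0 ≤ 2 * γ / q := by positivity
  have h := Real.le_log_one_add_of_nonneg hz
  have h1 : 2 * (2 * γ / q) / (2 * γ / q + 2) = 2 * γ / (q + γ) := by field_simp; ring
  rw [h1, Real.le_log_iff_exp_le (by linarith)] at h
  calc q * (Real.exp (2 * γ / (q + γ)) - 1) ≤ q * (2 * γ / q) := by gcongr; linarith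
    _ = 2 * γ := by field_simp

/-- One supermartingale step: multiplying a bounded nonnegative `G`-measurable `M` by
`exp (2γ (ξ̃ - ξ))` does not increase its integral. -/
lemma integral_mul_exp_step_le {Ω : Type*} {G m0 : MeasurableSpace Ω}
    [StandardBorelSpace Ω] (hG : G ≤ m0) {μ : Measure Ω} [IsProbabilityMeasure μ]
    {m : ℕ} (i : Fin m) {J : Ω → Fin m} {X ξ q M : Ω → ℝ} {C γ : ℝ} (hγ : 0 < γ)
    (hJ : Measurable J) (hX : Measurable X) (hX01 : ∀ ω, X ω ∈ Set.Icc (0 : ℝ) 1)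
    (hξ : Measurable[G] ξ) (hξ01 : ∀ ω, ξ ω ∈ Set.Icc (0 : ℝ) 1)
    (hq : Measurable[G] q) (hq01 : ∀ ω, q ω ∈ Set.Icc (0 : ℝ) 1)
    (hJq : μ[(fun ω => if J ω = i then (1 : ℝ) else 0) | G] =ᵐ[μ] q)
    (hXξ : μ[X | G] =ᵐ[μ] ξ) (hind : CondIndepFun G hG X J μ)
    (hM : Measurable[G] M) (hM0 : ∀ ω, 0 ≤ M ω) (hMC : ∀ ω, M ω ≤ C) :
    ∫ ω, M ω * Real.exp (2 * γ * (X ω / (q ω + γ) * (if J ω = i then 1 else 0) - ξ ω)) ∂μ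
      ≤ ∫ ω, M ω ∂μ := by
  have hMm : Measurable M := hM.mono hG le_rfl
  have hξm : Measurable ξ := hξ.mono hG le_rfl
  have hqm : Measurable q := hq.mono hG le_rfl
  have hBm : Measurable (fun ω => if J ω = i then (1 : ℝ) else 0) :=
    Measurable.ite (hJ (measurableSet_singleton i)) measurable_const measurable_const
  set W : Ω → ℝ := fun ω => M ω * Real.exp (-(2 * γ * ξ ω)) with hWdef
  set g : Ω → ℝ := fun ω => Real.exp (2 * γ / (q ω + γ)) - 1 with hgdef
  have hW : Measurable[G] W := hM.mul (Real.measurable_exp.comp (hξ.const_mul (2 * γ)).neg)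
  have hg : Measurable[G] g :=
    (Real.measurable_exp.comp ((hq.add_const γ).const_div (2 * γ))).sub_const 1
  have hW0 : ∀ ω, 0 ≤ W ω := fun ω => mul_nonneg (hM0 ω) (Real.exp_pos _).le
  have hWM : ∀ ω, W ω ≤ M ω := fun ω => by
    refine mul_le_of_le_one_right (hM0 ω) (Real.exp_le_one_iff.2 ?_)
    have := (hξ01 ω).1
    have : 0 ≤ 2 * γ * ξ ω := by positivity
    linarith
  have hWC : ∀ ω, W ω ≤ C := fun ω => (hWM ω).trans (hMC ω)
  have hg0 : ∀ ω, 0 ≤ g ω := fun ω => by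
    have := (hq01 ω).1
    exact sub_nonneg.2 (Real.one_le_exp (by positivity))
  have hgC : ∀ ω, g ω ≤ Real.exp 2 := fun ω => by
    have h1 := (hq01 ω).1
    have h2 : 2 * γ / (q ω + γ) ≤ 2 := by
      rw [div_le_iff₀ (by linarith)]; linarith
    have h3 := Real.exp_le_exp.2 h2
    simp only [hgdef]; linarith
  have hWg : Measurable[G] fun ω => W ω * g ω := hW.mul hg
  have hWg0 : ∀ ω, 0 ≤ W ω * g ω := fun ω => mul_nonneg (hW0 ω) (hg0 ω)
  have hWgC : ∀ ω, W ω * g ω ≤ C * Real.exp 2 := fun ω =>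
    mul_le_mul (hWC ω) (hgC ω) (hg0 ω) ((hW0 ω).trans (hWC ω))
  have hWint : Integrable W μ := integrable_of_nonneg_of_le (hW.mono hG le_rfl) hW0 hWC
  have hint : ∀ Y : Ω → ℝ, Measurable Y → (∀ ω, 0 ≤ Y ω) → (∀ ω, Y ω ≤ 1) →
      Integrable (fun ω => W ω * g ω * Y ω) μ := fun Y hY hY0 hY1 =>
    integrable_of_nonneg_of_le ((hWg.mono hG le_rfl).mul hY)
      (fun ω => mul_nonneg (hWg0 ω) (hY0 ω))
      (fun ω => (mul_le_of_le_one_right (hWg0 ω) (hY1 ω)).trans (hWgC ω))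
  have hint1 := hint (fun ω => X ω * (if J ω = i then 1 else 0)) (hX.mul hBm)
    (fun ω => mul_nonneg (hX01 ω).1 (by split_ifs <;> norm_num))
    (fun ω => (mul_le_of_le_one_right (hX01 ω).1 (by split_ifs <;> norm_num)).trans (hX01 ω).2)
  have hint2 := hint (fun ω => ξ ω * q ω) (hξm.mul hqm)
    (fun ω => mul_nonneg (hξ01 ω).1 (hq01 ω).1)
    (fun ω => (mul_le_of_le_one_right (hξ01 ω).1 (hq01 ω).2).trans (hξ01 ω).2)
  calc ∫ ω, M ω * Real.exp (2 * γ * (X ω / (q ω + γ) * (if J ω = i then 1 else 0) - ξ ω)) ∂μ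
      ≤ ∫ ω, W ω + W ω * g ω * (X ω * (if J ω = i then 1 else 0)) ∂μ := by
        refine integral_mono_of_nonneg
          (ae_of_all _ fun ω => mul_nonneg (hM0 ω) (Real.exp_pos _).le) (hWint.add hint1)
          (ae_of_all _ fun ω => ?_)
        have hx : X ω * (if J ω = i then 1 else 0) ∈ Set.Icc (0 : ℝ) 1 :=
          ⟨mul_nonneg (hX01 ω).1 (by split_ifs <;> norm_num),
            (mul_le_of_le_one_right (hX01 ω).1 (by split_ifs <;> norm_num)).trans (hX01 ω).2⟩
        have h1 := mul_le_mul_of_nonneg_left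
          (exp_le_chord (a := 2 * γ / (q ω + γ)) hx) (hW0 ω)
        have h2 : M ω * Real.exp (2 * γ * (X ω / (q ω + γ) * (if J ω = i then 1 else 0) - ξ ω))
            = W ω * Real.exp (X ω * (if J ω = i then 1 else 0) * (2 * γ / (q ω + γ))) := by
          simp only [hWdef]
          rw [mul_assoc (M ω), ← Real.exp_add]
          congr 2; ring
        calc _ = _ := h2
          _ ≤ _ := h1
          _ = _ := by simp only [hgdef]; ring
    _ = ∫ ω, W ω + W ω * g ω * (ξ ω * q ω) ∂μ := by
        rw [integral_add hWint hint1, integral_add hWint hint2,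
          integral_mul_indicator_of_condIndepFun hG i hJ hX hX01 hq hq01 hJq hXξ hind hWg hWg0 hWgC]
    _ ≤ ∫ ω, M ω ∂μ := by
        refine integral_mono (hWint.add hint2) (integrable_of_nonneg_of_le hMm hM0 hMC) fun ω => ?_
        have h1 : ξ ω * (q ω * g ω) ≤ ξ ω * (2 * γ) :=
          mul_le_mul_of_nonneg_left (mul_exp_sub_one_le (hq01 ω).1 hγ) (hξ01 ω).1
        have h2 := Real.add_one_le_exp (2 * γ * ξ ω)
        calc W ω + W ω * g ω * (ξ ω * q ω) = W ω * (1 + ξ ω * (q ω * g ω)) := by ring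
          _ ≤ W ω * Real.exp (2 * γ * ξ ω) :=
            mul_le_mul_of_nonneg_left (by linarith) (hW0 ω)
          _ = M ω := by
            simp only [hWdef]
            rw [mul_assoc, ← Real.exp_add]; simp

/-- Uniform high-probability concentration of the IX estimator with fixed
`γ > 0`: under the same interaction protocol as in Statement 5, for any `δ ∈ (0,1)`, with
probability at least `1 − δ`, simultaneously for all `i ∈ [m]`,
`Σₜ (ξ̃_{t,i} − ξ_{t,i}) ≤ (1/(2γ)) ln(m/δ)`. -/
theorem stmt6 {Ω : Type*} [m0 : MeasurableSpace Ω] [StandardBorelSpace Ω]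
    (μ : Measure Ω) [IsProbabilityMeasure μ]
    (T m : ℕ) (hm : 1 ≤ m)
    (F : ℕ → MeasurableSpace Ω) (hFmono : Monotone F) (hFle : ∀ t, F t ≤ m0)
    (p : ℕ → Ω → Fin m → ℝ)
    (hp_meas : ∀ t ∈ Finset.Icc 1 T, Measurable[F (t - 1)] (p t))
    (hp_simplex : ∀ t ∈ Finset.Icc 1 T, ∀ ω, p t ω ∈ stdSimplex ℝ (Fin m))
    (ξ : ℕ → Fin m → Ω → ℝ)
    (hξ_meas : ∀ t ∈ Finset.Icc 1 T, ∀ i, Measurable[F (t - 1)] (ξ t i))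
    (hξ01 : ∀ t ∈ Finset.Icc 1 T, ∀ i ω, ξ t i ω ∈ Set.Icc (0 : ℝ) 1)
    (it : ℕ → Ω → Fin m)
    (hit_adapted : ∀ t ∈ Finset.Icc 1 T, Measurable[F t] (it t))
    (hit_law : ∀ t ∈ Finset.Icc 1 T, ∀ i,
      μ[(fun ω => if it t ω = i then (1 : ℝ) else 0) | F (t - 1)] =ᵐ[μ] fun ω => p t ω i)
    (ξhat : ℕ → Fin m → Ω → ℝ)
    (hξhat_adapted : ∀ t ∈ Finset.Icc 1 T, ∀ i, Measurable[F t] (ξhat t i))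
    (hξhat01 : ∀ t ∈ Finset.Icc 1 T, ∀ i ω, ξhat t i ω ∈ Set.Icc (0 : ℝ) 1)
    (hξhat_mean : ∀ t ∈ Finset.Icc 1 T, ∀ i, μ[ξhat t i | F (t - 1)] =ᵐ[μ] ξ t i)
    (hcondindep : ∀ t ∈ Finset.Icc 1 T, ∀ i,
      CondIndepFun (F (t - 1)) (hFle (t - 1)) (ξhat t i) (it t) μ)
    (γ : ℝ) (hγ : 0 < γ)
    (ξtilde : ℕ → Fin m → Ω → ℝ)
    (hξtilde : ∀ t i ω, ξtilde t i ω =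
      (ξhat t i ω / (p t ω i + γ)) * (if it t ω = i then 1 else 0)) :
    ∀ δ : ℝ, δ ∈ Set.Ioo (0 : ℝ) 1 →
      ENNReal.ofReal (1 - δ) ≤
        μ {ω | ∀ i, ∑ t ∈ Finset.Icc 1 T, (ξtilde t i ω - ξ t i ω) ≤
          (1 / (2 * γ)) * Real.log (m / δ)} := by
  intro δ hδ
  have hδ0 : 0 < δ := hδ.1
  have hm0 : (0 : ℝ) < m := by exact_mod_cast hm
  have hq01 : ∀ t ∈ Finset.Icc 1 T, ∀ i ω, p t ω i ∈ Set.Icc (0 : ℝ) 1 := fun t ht i ω =>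
    mem_Icc_of_mem_stdSimplex (hp_simplex t ht ω) i
  -- The bound `exp (2 n)` serves only integrability: each factor is at most `exp 2`,
  -- because `ξ̃ ≤ 1 / γ`.
  have hsuper : ∀ i : Fin m, ∀ n : ℕ, n ≤ T →
      Measurable[F n] (fun ω =>
        Real.exp (2 * γ * ∑ t ∈ Finset.Icc 1 n, (ξtilde t i ω - ξ t i ω))) ∧
      (∀ ω, Real.exp (2 * γ * ∑ t ∈ Finset.Icc 1 n, (ξtilde t i ω - ξ t i ω))
        ≤ Real.exp (2 * n)) ∧
      ∫ ω, Real.exp (2 * γ * ∑ t ∈ Finset.Icc 1 n, (ξtilde t i ω - ξ t i ω)) ∂μ ≤ 1 := by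
    intro i n
    induction n with
    | zero => intro _; simp
    | succ n ih =>
      intro hn
      obtain ⟨h1, h2, h3⟩ := ih (by omega)
      have ht : n + 1 ∈ Finset.Icc 1 T := Finset.mem_Icc.2 ⟨by omega, hn⟩
      have hstep : ∀ ω, Real.exp (2 * γ * ∑ t ∈ Finset.Icc 1 (n + 1), (ξtilde t i ω - ξ t i ω))
          = Real.exp (2 * γ * ∑ t ∈ Finset.Icc 1 n, (ξtilde t i ω - ξ t i ω)) *
            Real.exp (2 * γ * (ξhat (n + 1) i ω / (p (n + 1) ω i + γ) *
              (if it (n + 1) ω = i then 1 else 0) - ξ (n + 1) i ω)) := fun ω => by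
        rw [Finset.sum_Icc_succ_top (by omega), mul_add, Real.exp_add, hξtilde (n + 1)]
      have hle : F n ≤ F (n + 1) := hFmono n.le_succ
      have hpm : Measurable[F n] fun ω => p (n + 1) ω i :=
        (measurable_pi_apply i).comp (hp_meas _ ht)
      have hξm : Measurable[F n] (ξ (n + 1) i) := hξ_meas _ ht i
      simp only [hstep]
      refine ⟨?_, fun ω => ?_, ?_⟩
      · have hBm : Measurable[F (n + 1)] (fun ω => if it (n + 1) ω = i then (1 : ℝ) else 0) :=
          Measurable.ite (hit_adapted _ ht (measurableSet_singleton i))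
            measurable_const measurable_const
        exact (h1.mono hle le_rfl).mul (Real.measurable_exp.comp
          (((((hξhat_adapted _ ht i).div ((hpm.mono hle le_rfl).add_const γ)).mul hBm).sub
            (hξm.mono hle le_rfl)).const_mul (2 * γ)))
      · have hp0 := (hq01 _ ht i ω).1
        have hX := hξhat01 _ ht i ω
        have hξ0 := (hξ01 _ ht i ω).1
        have hr : ξhat (n + 1) i ω / (p (n + 1) ω i + γ) *
            (if it (n + 1) ω = i then 1 else 0) ≤ 1 / γ := by
          have hd : ξhat (n + 1) i ω / (p (n + 1) ω i + γ) ≤ 1 / γ :=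
            div_le_div₀ zero_le_one hX.2 hγ (by linarith)
          refine (mul_le_of_le_one_right (div_nonneg hX.1 (by linarith)) ?_).trans hd
          split_ifs <;> norm_num
        have h4 : 2 * γ * (ξhat (n + 1) i ω / (p (n + 1) ω i + γ) *
              (if it (n + 1) ω = i then 1 else 0) - ξ (n + 1) i ω) ≤ 2 := by
          calc _ ≤ 2 * γ * (1 / γ) := mul_le_mul_of_nonneg_left (by linarith) (by linarith)
            _ = 2 := by field_simp
        calc _ ≤ Real.exp (2 * n) * Real.exp 2 :=
              mul_le_mul (h2 ω) (Real.exp_le_exp.2 h4) (Real.exp_pos _).le (Real.exp_pos _).le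
          _ = Real.exp (2 * ((n + 1 : ℕ) : ℝ)) := by
              rw [← Real.exp_add]; push_cast; congr 1; ring
      · exact (integral_mul_exp_step_le (hFle n) i hγ ((hit_adapted _ ht).mono (hFle _) le_rfl)
          ((hξhat_adapted _ ht i).mono (hFle _) le_rfl) (hξhat01 _ ht i) hξm (hξ01 _ ht i) hpm
          (hq01 _ ht i) (hit_law _ ht i) (hξhat_mean _ ht i) (hcondindep _ ht i) h1
          (fun ω => (Real.exp_pos _).le) h2).trans h3
  have hbad : ∀ i : Fin m, μ {ω | ¬ ∑ t ∈ Finset.Icc 1 T, (ξtilde t i ω - ξ t i ω) ≤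
      (1 / (2 * γ)) * Real.log (m / δ)} ≤ ENNReal.ofReal (δ / m) := by
    intro i
    obtain ⟨h1, h2, h3⟩ := hsuper i T le_rfl
    have hmk := mul_meas_ge_le_integral_of_nonneg (μ := μ)
      (ae_of_all _ fun ω => (Real.exp_pos _).le)
      (integrable_of_nonneg_of_le (h1.mono (hFle T) le_rfl) (fun ω => (Real.exp_pos _).le) h2)
      (m / δ)
    have hmk' : μ {ω | m / δ ≤
        Real.exp (2 * γ * ∑ t ∈ Finset.Icc 1 T, (ξtilde t i ω - ξ t i ω))}
          ≤ ENNReal.ofReal (δ / m) := by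
      rw [ENNReal.le_ofReal_iff_toReal_le (measure_ne_top μ _) (by positivity), le_div_iff₀' hm0]
      have := hmk.trans h3
      rwa [div_mul_eq_mul_div, div_le_one hδ0] at this
    refine (measure_mono fun ω hω => ?_).trans hmk'
    simp only [Set.mem_ofPred_eq, not_le] at hω ⊢
    rw [← Real.log_le_iff_le_exp (by positivity)]
    have := mul_lt_mul_of_pos_left hω (show 0 < 2 * γ by linarith)
    rw [← mul_assoc, mul_one_div_cancel (by positivity), one_mul] at this
    exact this.le
  set S := {ω | ∀ i, ∑ t ∈ Finset.Icc 1 T, (ξtilde t i ω - ξ t i ω) ≤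
          (1 / (2 * γ)) * Real.log (m / δ)} with hS
  have hSc : μ Sᶜ ≤ ENNReal.ofReal δ := by
    have : Sᶜ = ⋃ i : Fin m, {ω | ¬ ∑ t ∈ Finset.Icc 1 T, (ξtilde t i ω - ξ t i ω) ≤
      (1 / (2 * γ)) * Real.log (m / δ)} := by
      ext ω; simp [hS]
    rw [this]
    calc _ ≤ ∑ i : Fin m, μ {ω | ¬ ∑ t ∈ Finset.Icc 1 T, (ξtilde t i ω - ξ t i ω) ≤
          (1 / (2 * γ)) * Real.log (m / δ)} := measure_iUnion_fintype_le μ _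
      _ ≤ ∑ _i : Fin m, ENNReal.ofReal (δ / m) := Finset.sum_le_sum fun i _ => hbad i
      _ = ENNReal.ofReal δ := by
        rw [← ENNReal.ofReal_sum_of_nonneg fun _ _ => by positivity]
        congr 1
        simp; field_simp
  have h1 : (1 : ENNReal) ≤ μ S + μ Sᶜ := by
    rw [← measure_univ (μ := μ), ← Set.union_compl_self S]
    exact measure_union_le _ _
  rw [ENNReal.ofReal_sub _ hδ0.le, ENNReal.ofReal_one, tsub_le_iff_right]
  exact h1.trans (by gcongr)
end

section
/- Let W be a convex subset of a real normed vector space with norm ‖·‖_w and dual norm ‖·‖_{w,*}, let D > 0, G > 0, L ≥ 0, m ≥ 2, and let R_1,…,R_m : W → ℝ be differentiable functions such that ‖∇R_i(w)‖_{w,*} ≤ G, |R_i(w) − R_i(w′)| ≤ G‖w − w′‖_w, and ‖∇R_i(w) − ∇R_i(w′)‖_{w,*} ≤ L‖w − w′‖_w for all w, w′ ∈ W and i ∈ [m]. Let p_1,…,p_m > 0 with p_max = max_i p_i. Define the monotone operator F([w;q]) = (Σ_{i=1}^m q_i p_i ∇R_i(w), −(p_1 R_1(w),…,p_m R_m(w)))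 on W × Δ_m, the product norm ‖[w;q]‖ = √(‖w‖_w²/(2D²) + ‖q‖₁²/(2 ln m)) and its dual ‖[u;v]‖_* = √(2D²‖u‖_{w,*}² + 2‖v‖_∞² ln m). Then for all w, w′ ∈ W and q, q′ ∈ Δ_m, ‖F([w;q]) − F([w′;q′])‖_* ≤ p_max·√(8D⁴L² + 8D²G² ln m)·‖[w − w′; q − q′]‖; in particular the Lipschitz constant is at most L̃ = 2√2·p_max·(D²L + DG√(ln m)). -/
/-!
The difference of the gradient components splits as
`∑ qᵢ pᵢ (∇Rᵢ(w) − ∇Rᵢ(w')) + ∑ (qᵢ − q'ᵢ) pᵢ ∇Rᵢ(w')`. Since `q` is a probability vector,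
its dual norm is at most `pmax (L a + G b)` with `a = ‖w − w'‖` and `b = ‖q − q'‖₁`
(`norm_gradient_diff_le`), while the value components differ by at most `pmax G a` in the sup norm.
Both claims then reduce to inequalities between real numbers: `(x + y)² ≤ 2x² + 2y²` for the
first, and subadditivity of the square root for the second.
-/

open scoped BigOperators

/-- Smoothness controls the change in `w`, boundedness of the gradients the change in `q`. -/
lemma norm_gradient_diff_le {V ι : Type*} [SeminormedAddCommGroup V] [NormedSpace ℝ V] [Fintype ι]
    {P A G : ℝ} (hP : 0 ≤ P) {p q q' : ι → ℝ} {g g' : ι → V}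
    (hp : ∀ i, 0 ≤ p i) (hpP : ∀ i, p i ≤ P)
    (hq : q ∈ stdSimplex ℝ ι) (hg' : ∀ i, ‖g' i‖ ≤ G) (hgg' : ∀ i, ‖g i - g' i‖ ≤ A) :
    ‖∑ i, (q i * p i) • g i - ∑ i, (q' i * p i) • g' i‖ ≤ P * (A + G * ∑ i, |q i - q' i|) := by
  have hsplit : ∑ i, (q i * p i) • g i - ∑ i, (q' i * p i) • g' i =
      ∑ i, ((q i * p i) • (g i - g' i) + ((q i - q' i) * p i) • g' i) := by
    rw [← Finset.sum_sub_distrib]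
    refine Finset.sum_congr rfl fun i _ => ?_
    module
  have hterm : ∀ i, ‖(q i * p i) • (g i - g' i) + ((q i - q' i) * p i) • g' i‖ ≤
      P * A * q i + P * G * |q i - q' i| := by
    intro i
    refine (norm_add_le _ _).trans ?_
    rw [norm_smul, norm_smul, Real.norm_eq_abs, Real.norm_eq_abs, abs_mul, abs_mul,
      abs_of_nonneg (hq.1 i), abs_of_nonneg (hp i)]
    have h1 : p i * ‖g i - g' i‖ ≤ P * A := mul_le_mul (hpP i) (hgg' i) (norm_nonneg _) hP
    have h2 : p i * ‖g' i‖ ≤ P * G := mul_le_mul (hpP i) (hg' i) (norm_nonneg _) hP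
    have h3 := mul_le_mul_of_nonneg_left h1 (hq.1 i)
    have h4 := mul_le_mul_of_nonneg_left h2 (abs_nonneg (q i - q' i))
    linarith
  rw [hsplit]
  calc _ ≤ ∑ i, (P * A * q i + P * G * |q i - q' i|) := norm_sum_le_of_le _ fun i _ => hterm i
    _ = P * (A + G * ∑ i, |q i - q' i|) := by
      rw [Finset.sum_add_distrib, ← Finset.mul_sum, ← Finset.mul_sum, hq.2]
      ring

/-- The scalar inequality behind the Lipschitz bound, with `ℓ = ln m`, `a = ‖w − w'‖`,
`b = ‖q − q'‖₁`, and `u`, `v` the norms of the two components of the difference. -/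
lemma sqrt_dual_le {D G L P ℓ a b u v : ℝ} (hD : 0 < D) (hℓ : 0 < ℓ) (hP : 0 ≤ P)
    (hu0 : 0 ≤ u) (hv0 : 0 ≤ v) (hu : u ≤ P * (L * a + G * b)) (hv : v ≤ P * (G * a)) :
    √(2 * D ^ 2 * u ^ 2 + 2 * v ^ 2 * ℓ) ≤
      P * √(8 * D ^ 4 * L ^ 2 + 8 * D ^ 2 * G ^ 2 * ℓ) *
        √(a ^ 2 / (2 * D ^ 2) + b ^ 2 / (2 * ℓ)) := by
  rw [mul_assoc P, ← Real.sqrt_mul (by positivity)]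
  have hu2 : u ^ 2 ≤ P ^ 2 * (2 * (L * a) ^ 2 + 2 * (G * b) ^ 2) := by
    refine (pow_le_pow_left₀ hu0 hu 2).trans ?_
    rw [mul_pow]
    gcongr
    linarith [sq_nonneg (L * a - G * b)]
  have hv2 : v ^ 2 ≤ P ^ 2 * (G * a) ^ 2 := (pow_le_pow_left₀ hv0 hv 2).trans_eq (mul_pow _ _ _)
  have hprod : (8 * D ^ 4 * L ^ 2 + 8 * D ^ 2 * G ^ 2 * ℓ) *
      (a ^ 2 / (2 * D ^ 2) + b ^ 2 / (2 * ℓ)) =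
      (2 * D ^ 2 * (2 * (L * a) ^ 2 + 2 * (G * b) ^ 2) + 2 * (G * a) ^ 2 * ℓ) +
        (2 * (G * a) ^ 2 * ℓ + 4 * D ^ 4 * L ^ 2 * b ^ 2 / ℓ) := by
    field_simp
    ring
  refine Real.sqrt_le_iff.2 ⟨by positivity, ?_⟩
  rw [mul_pow, Real.sq_sqrt (by positivity), hprod]
  have h1 := mul_le_mul_of_nonneg_left hu2 (by positivity : 0 ≤ 2 * D ^ 2)
  have h2 := mul_le_mul_of_nonneg_left hv2 (by positivity : 0 ≤ 2 * ℓ)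
  have h3 : 0 ≤ P ^ 2 * (2 * (G * a) ^ 2 * ℓ + 4 * D ^ 4 * L ^ 2 * b ^ 2 / ℓ) := by positivity
  linarith

/-- Lipschitz continuity of the monotone operator of the weighted GDRO
problem: with `‖∇Rᵢ(w)‖_* ≤ G`, `Rᵢ` `G`-Lipschitz and `L`-smooth on `W`, `pᵢ > 0`,
`F([w;q]) = (Σᵢ qᵢ pᵢ ∇Rᵢ(w), −(p₁R₁(w),…,p_mR_m(w)))`, product norm
`‖[w;q]‖ = √(‖w‖²/(2D²) + ‖q‖₁²/(2 ln m))` and dual norm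
`‖[u;v]‖_* = √(2D²‖u‖_*² + 2‖v‖_∞² ln m)`, `F` is Lipschitz with constant
`p_max √(8D⁴L² + 8D²G² ln m) ≤ L̃ = 2√2 p_max (D²L + DG√(ln m))`. -/
theorem stmt8 {E : Type*} [NormedAddCommGroup E] [NormedSpace ℝ E]
    (W : Set E) (hWconv : Convex ℝ W)
    (m : ℕ) (hm : 2 ≤ m)
    (D G L : ℝ) (hD : 0 < D) (hG : 0 < G) (hL : 0 ≤ L)
    (R : Fin m → E → ℝ) (R' : Fin m → E → (E →L[ℝ] ℝ))
    (hderiv : ∀ i, ∀ w ∈ W, HasFDerivAt (R i) (R' i w) w)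
    (hgrad : ∀ i, ∀ w ∈ W, ‖R' i w‖ ≤ G)
    (hlip : ∀ i, ∀ w ∈ W, ∀ w' ∈ W, |R i w - R i w'| ≤ G * ‖w - w'‖)
    (hsmooth : ∀ i, ∀ w ∈ W, ∀ w' ∈ W, ‖R' i w - R' i w'‖ ≤ L * ‖w - w'‖)
    (p : Fin m → ℝ) (hp : ∀ i, 0 < p i)
    (pmax : ℝ) (hpmax : pmax = ⨆ i, p i)
    -- the product norm on `E × ℝ^m` and its dual norm
    (pnorm : E × (Fin m → ℝ) → ℝ)
    (hpnorm : ∀ x : E × (Fin m → ℝ),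
      pnorm x = Real.sqrt (‖x.1‖ ^ 2 / (2 * D ^ 2) +
        (∑ i, |x.2 i|) ^ 2 / (2 * Real.log m)))
    (dnorm : (E →L[ℝ] ℝ) × (Fin m → ℝ) → ℝ)
    (hdnorm : ∀ y : (E →L[ℝ] ℝ) × (Fin m → ℝ),
      dnorm y = Real.sqrt (2 * D ^ 2 * ‖y.1‖ ^ 2 +
        2 * (⨆ i, |y.2 i|) ^ 2 * Real.log m))
    -- the monotone operator of the weighted GDRO problem
    (F : E × (Fin m → ℝ) → (E →L[ℝ] ℝ) × (Fin m → ℝ))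
    (hF : ∀ w q, F (w, q) =
      (∑ i, (q i * p i) • R' i w, fun i => -(p i * R i w))) :
    (∀ w ∈ W, ∀ w' ∈ W, ∀ q ∈ stdSimplex ℝ (Fin m), ∀ q' ∈ stdSimplex ℝ (Fin m),
      dnorm (F (w, q) - F (w', q')) ≤
        pmax * Real.sqrt (8 * D ^ 4 * L ^ 2 + 8 * D ^ 2 * G ^ 2 * Real.log m) *
          pnorm (w - w', q - q')) ∧
    pmax * Real.sqrt (8 * D ^ 4 * L ^ 2 + 8 * D ^ 2 * G ^ 2 * Real.log m) ≤
      2 * Real.sqrt 2 * pmax * (D ^ 2 * L + D * G * Real.sqrt (Real.log m)) := by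
  have hℓ : 0 < Real.log m := Real.log_pos (by exact_mod_cast hm)
  have : Nonempty (Fin m) := ⟨⟨0, by omega⟩⟩
  have hpP : ∀ i, p i ≤ pmax := fun i => hpmax ▸ le_ciSup (Set.finite_range p).bddAbove i
  have hP : 0 ≤ pmax := (hp ⟨0, by omega⟩).le.trans (hpP _)
  constructor
  · intro w hw w' hw' q hq q' hq'
    rw [hdnorm, hpnorm, hF, hF]
    refine sqrt_dual_le hD hℓ hP (norm_nonneg _) (Real.iSup_nonneg fun _ => abs_nonneg _) ?_ ?_
    · exact norm_gradient_diff_le hP (fun i => (hp i).le) hpP hq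
        (fun i => hgrad i w' hw') (fun i => hsmooth i w hw w' hw')
    · refine ciSup_le fun i => ?_
      have hval : |-(p i * R i w) - -(p i * R i w')| = p i * |R i w - R i w'| := by
        rw [← abs_of_pos (hp i), ← abs_mul, ← abs_neg, abs_of_pos (hp i)]
        congr 1
        ring
      exact hval.trans_le (mul_le_mul (hpP i) (hlip i w hw w' hw') (abs_nonneg _) hP)
  · have hX : √(8 * D ^ 4 * L ^ 2 + 8 * D ^ 2 * G ^ 2 * Real.log m) ≤
        2 * √2 * (D ^ 2 * L + D * G * √(Real.log m)) := by
      refine Real.sqrt_le_iff.2 ⟨by positivity, ?_⟩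
      rw [mul_pow, mul_pow, Real.sq_sqrt zero_le_two]
      have hs := Real.sq_sqrt hℓ.le
      have hcross : 0 ≤ 16 * (D ^ 2 * L * (D * G * √(Real.log m))) := by positivity
      calc _ = 8 * D ^ 4 * L ^ 2 + 8 * D ^ 2 * G ^ 2 * √(Real.log m) ^ 2 := by rw [hs]
        _ ≤ _ := by linarith
    calc _ ≤ pmax * (2 * √2 * (D ^ 2 * L + D * G * √(Real.log m))) :=
          mul_le_mul_of_nonneg_left hX hP
      _ = _ := by ring
end

section
/- Let X be a nonnegative real-valued random variable and α ≥ 0 such that Pr[X ≥ α + γ] ≤ exp(−γ²/2) for all γ > 0. Then Pr[X ≥ γ] ≤ 2·exp(−γ²/max(6α², 8)) for all γ > 0. -/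
/-! If `2α ≤ γ`, then `γ - α ≥ γ/2`, so the hypothesis at `γ - α` gives the bound
`exp (-γ²/8)`, which suffices because the maximum is at least `8`. If `γ < 2α`, then
`γ² / max (6α²) 8 ≤ 4/6 < log 2`, so the claimed bound exceeds `1` and is trivial. -/

open MeasureTheory

/-- If a nonnegative random variable `X` satisfies
`Pr[X ≥ α + γ] ≤ exp(−γ²/2)` for all `γ > 0`, then
`Pr[X ≥ γ] ≤ 2 exp(−γ²/max(6α², 8))` for all `γ > 0`. -/
theorem stmt9 {Ω : Type*} [MeasurableSpace Ω] (μ : Measure Ω) [IsProbabilityMeasure μ]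
    (X : Ω → ℝ) (hXmeas : Measurable X) (hXnonneg : ∀ ω, 0 ≤ X ω)
    (α : ℝ) (hα : 0 ≤ α)
    (h : ∀ γ : ℝ, 0 < γ → μ {ω | α + γ ≤ X ω} ≤ ENNReal.ofReal (Real.exp (-γ ^ 2 / 2))) :
    ∀ γ : ℝ, 0 < γ →
      μ {ω | γ ≤ X ω} ≤ ENNReal.ofReal (2 * Real.exp (-γ ^ 2 / max (6 * α ^ 2) 8)) := by
  intro γ hγ
  have hM8 : (8 : ℝ) ≤ max (6 * α ^ 2) 8 := le_max_right _ _
  have hMα : 6 * α ^ 2 ≤ max (6 * α ^ 2) 8 := le_max_left _ _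
  set M := max (6 * α ^ 2) 8
  have hM : 0 < M := by linarith
  rcases le_or_gt (2 * α) γ with hc | hc
  · have hd : 0 < γ - α := by linarith
    have h1 := h (γ - α) hd
    rw [add_sub_cancel] at h1
    refine h1.trans (ENNReal.ofReal_le_ofReal ?_)
    have h2 : γ ^ 2 / M ≤ γ ^ 2 / 8 := by gcongr
    have h3 : Real.exp (-(γ - α) ^ 2 / 2) ≤ Real.exp (-γ ^ 2 / M) := by
      apply Real.exp_le_exp.mpr
      have h4 : -γ ^ 2 / M = -(γ ^ 2 / M) := neg_div _ _
      rw [h4]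
      nlinarith
    linarith [Real.exp_pos (-γ ^ 2 / M)]
  · refine prob_le_one.trans ?_
    rw [← ENNReal.ofReal_one]
    apply ENNReal.ofReal_le_ofReal
    have h2 : γ ^ 2 / M ≤ 2 / 3 := by
      rw [div_le_iff₀ hM]
      nlinarith
    have h3 : Real.exp (-Real.log 2) ≤ Real.exp (-γ ^ 2 / M) := by
      apply Real.exp_le_exp.mpr
      rw [neg_div]
      linarith [Real.log_two_gt_d9]
    rw [Real.exp_neg, Real.exp_log two_pos] at h3
    linarith
end
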